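/- arXiv:2107.11846 — 2 statements merged into one kernel-verified Lean document; each statement's English description precedes it below -/
import Mathlib

section
/- Let κ > 0 and let n be a positive integer such that P(R ≥ κ/n) > 0 and P(R ≥ κ/(n−ζ)) = 0 for some ζ ∈ (0,1); assume moreover that P(R₁ + ⋯ + Rₙ = κ) = 0, where R₁,…,Rₙ are independent copies of R. Then P(Y_t ≥ κt) = Qⁿ·D_I^{(n)}(κ)·t^{−(γ−1)n}·(1+o(1)) as t → ∞, where D_I^{(n)}(κ) := (1/n!) ∫_{[0,1]ⁿ} P(s₁R₁ + ⋯ + sₙRₙ ≥ κ) ν(ds₁)⋯ν(dsₙ) is a finite positive constant. -/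
open MeasureTheory Filter Set
open scoped ENNReal NNReal Topology

noncomputable section

/-- `ℓ_t(s,u)`: the length of the interval `[s,s+u] ∩ [0,t]`. -/
def ellK (t s u : ℝ) : ℝ := max 0 (min (s + u) t - max s 0)

/-- The intensity measure `u^{-γ-1} du` on `(0,∞)`. -/
def muU (γ : ℝ) : Measure ℝ :=
  (volume.restrict (Set.Ioi 0)).withDensity fun u => ENNReal.ofReal (u ^ (-γ - 1))

/-- The measure `μ^ℓ_t` on `(0,∞)`:
`μ^ℓ_t(A) = ∫_ℝ ∫_0^∞ 1{ℓ_t(s,u) ∈ A} u^{-γ-1} du ds`. -/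
def muEll (γ t : ℝ) : Measure ℝ :=
  (Measure.map (fun p : ℝ × ℝ => ellK t p.1 p.2)
    ((volume : Measure ℝ).prod (muU γ))).restrict (Set.Ioi 0)

/-- The measure `μ^{ℓ,r}_t` on `(0,∞)`:
`μ^{ℓ,r}_t(A) = ∫_{(0,∞)} ∫_{(0,∞)} 1{rℓ ∈ A} μ^ℓ_t(dℓ) F_R(dr)`. -/
def muEllR (γ t : ℝ) (FR : Measure ℝ) : Measure ℝ :=
  (Measure.map (fun p : ℝ × ℝ => p.1 * p.2) (FR.prod (muEll γ t))).restrict (Set.Ioi 0)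

/-- The measure `ν` on `[0,1]`: density `s^{-(γ+1)} + ((2-γ)/γ)·s^{-γ}` on `(0,1)` with
respect to Lebesgue measure, together with an atom of mass `1/(γ(γ-1))` at the point `1`. -/
def nuM (γ : ℝ) : Measure ℝ :=
  (volume.restrict (Set.Ioo 0 1)).withDensity
      (fun s => ENNReal.ofReal (s ^ (-(γ + 1)) + (2 - γ) / γ * s ^ (-γ)))
    + (Real.toNNReal (1 / (γ * (γ - 1)))) • Measure.dirac 1

instance nuM.sigmaFinite (γ : ℝ) : SigmaFinite (nuM γ) := by
  unfold nuM; infer_instance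

end


/-- `j`-fold convolution power. -/
noncomputable def cpow (m : Measure ℝ) (j : ℕ) : Measure ℝ :=
  (Measure.pi fun _ : Fin j => m).map (fun x => ∑ i, x i)

/-- Compound Poisson law with intensity `c • m`. -/
noncomputable def cpLaw (c : ℝ) (m : Measure ℝ) : Measure ℝ :=
  Measure.sum (fun j : ℕ =>
    ENNReal.ofReal (Real.exp (-(c * m.real univ)) * c ^ j / j.factorial) • cpow m j)

lemma cpow_mgf (m : Measure ℝ) [IsFiniteMeasure m] (l : ℝ)
    (hi : Integrable (fun v => Real.exp (l * v)) m) (j : ℕ) :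
    ∫⁻ x, ENNReal.ofReal (Real.exp (l * x)) ∂(cpow m j)
      = ENNReal.ofReal ((∫ v, Real.exp (l * v) ∂m) ^ j) := by
  unfold cpow
  rw [lintegral_map (by fun_prop) (by fun_prop)]
  have h1 : ∀ x : Fin j → ℝ, Real.exp (l * ∑ i, x i) = ∏ i, Real.exp (l * x i) := by
    intro x; rw [← Real.exp_sum, Finset.mul_sum]
  simp_rw [h1]
  rw [← ofReal_integral_eq_lintegral_ofReal]
  · rw [integral_fintype_prod_eq_prod (fun (_ : Fin j) (v : ℝ) => Real.exp (l * v))]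
    simp
  · exact Integrable.fintype_prod (f := fun (_ : Fin j) (v : ℝ) => Real.exp (l * v)) (fun _ => hi)
  · exact Eventually.of_forall fun x => Finset.prod_nonneg fun i _ => (Real.exp_pos _).le

lemma cpLaw_mgf (c : ℝ) (hc : 0 ≤ c) (m : Measure ℝ) [IsFiniteMeasure m] (l : ℝ)
    (hi : Integrable (fun v => Real.exp (l * v)) m) :
    ∫⁻ x, ENNReal.ofReal (Real.exp (l * x)) ∂(cpLaw c m)
      = ENNReal.ofReal (Real.exp (c * (∫ v, Real.exp (l * v) ∂m) - c * m.real univ)) := by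
  unfold cpLaw
  have hI : 0 ≤ ∫ v, Real.exp (l * v) ∂m := integral_nonneg fun v => (Real.exp_pos _).le
  rw [lintegral_sum_measure]
  simp_rw [lintegral_smul_measure, cpow_mgf m l hi, smul_eq_mul]
  have h2 : ∀ j : ℕ, ENNReal.ofReal (Real.exp (-(c * m.real univ)) * c ^ j / j.factorial)
      * ENNReal.ofReal ((∫ v, Real.exp (l * v) ∂m) ^ j)
      = ENNReal.ofReal (Real.exp (-(c * m.real univ)) *
        ((c * ∫ v, Real.exp (l * v) ∂m) ^ j / j.factorial)) := by
    intro j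
    rw [← ENNReal.ofReal_mul (by positivity)]
    congr 1
    rw [mul_pow]; ring
  simp_rw [h2]
  have hs : HasSum (fun j : ℕ => (c * ∫ v, Real.exp (l * v) ∂m) ^ j / j.factorial)
      (Real.exp (c * ∫ v, Real.exp (l * v) ∂m)) := by
    rw [Real.exp_eq_exp_ℝ]
    exact NormedSpace.expSeries_div_hasSum_exp _
  have hs2 := hs.mul_left (Real.exp (-(c * m.real univ)))
  rw [← ENNReal.ofReal_tsum_of_nonneg (fun j => by positivity) hs2.summable, hs2.tsum_eq,
    ← Real.exp_add]
  congr 2; ring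

lemma cpLaw_prob (c : ℝ) (hc : 0 ≤ c) (m : Measure ℝ) [IsFiniteMeasure m] :
    IsProbabilityMeasure (cpLaw c m) := by
  constructor
  have := cpLaw_mgf c hc m 0 (by simp)
  simpa using this

lemma cpow_char (m : Measure ℝ) [IsFiniteMeasure m] (θ : ℝ) (j : ℕ) :
    ∫ x, Complex.exp (θ * x * Complex.I) ∂(cpow m j)
      = (∫ v, Complex.exp (θ * v * Complex.I) ∂m) ^ j := by
  unfold cpow
  rw [integral_map (by fun_prop) (by fun_prop)]
  have h1 : ∀ x : Fin j → ℝ, Complex.exp (θ * ((∑ i, x i : ℝ) : ℂ) * Complex.I)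
      = ∏ i, Complex.exp (θ * x i * Complex.I) := by
    intro x; rw [← Complex.exp_sum]; push_cast; rw [Finset.mul_sum, Finset.sum_mul]
  simp_rw [h1]
  rw [integral_fintype_prod_eq_prod (fun (_ : Fin j) (v : ℝ) => Complex.exp (θ * v * Complex.I))]
  simp

lemma char_integrable (m : Measure ℝ) [IsFiniteMeasure m] (θ : ℝ) :
    Integrable (fun v : ℝ => Complex.exp (θ * v * Complex.I)) m := by
  refine Integrable.of_bound (by fun_prop) 1 (Eventually.of_forall fun v => ?_)
  rw [← Complex.ofReal_mul, Complex.norm_exp_ofReal_mul_I]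

lemma cpLaw_char (c : ℝ) (hc : 0 ≤ c) (m : Measure ℝ) [IsFiniteMeasure m] (θ : ℝ) :
    charFun (cpLaw c m) θ
      = Complex.exp (c * (∫ v, Complex.exp (θ * v * Complex.I) ∂m) - c * m.real univ) := by
  haveI := cpLaw_prob c hc m
  rw [charFun_apply_real]
  have hi := char_integrable (cpLaw c m) θ
  unfold cpLaw at hi ⊢
  have h1 := hasSum_integral_measure hi
  refine h1.unique ?_
  simp_rw [integral_smul_measure, cpow_char m θ]
  have hs : HasSum (fun j : ℕ => (c * ∫ v, Complex.exp (θ * v * Complex.I) ∂m) ^ j / j.factorial)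
      (Complex.exp (c * ∫ v, Complex.exp (θ * v * Complex.I) ∂m)) := by
    rw [Complex.exp_eq_exp_ℂ]
    exact NormedSpace.expSeries_div_hasSum_exp _
  have hs2 := hs.mul_left (Complex.exp (-(c * m.real univ)))
  rw [← Complex.exp_add] at hs2
  convert! hs2 using 1
  · ext j
    rw [ENNReal.toReal_ofReal (by positivity), Complex.real_smul]
    push_cast
    rw [mul_pow]; ring
  · congr 1; ring


/-- Compensated compound Poisson law. -/
noncomputable def ccp (c : ℝ) (m : Measure ℝ) : Measure ℝ :=
  (cpLaw c m).map (fun x => x + (-(c * ∫ v, v ∂m)))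

lemma ccp_prob (c : ℝ) (hc : 0 ≤ c) (m : Measure ℝ) [IsFiniteMeasure m] :
    IsProbabilityMeasure (ccp c m) := by
  have := cpLaw_prob c hc m
  exact Measure.isProbabilityMeasure_map (by fun_prop)

lemma ccp_char (c : ℝ) (hc : 0 ≤ c) (m : Measure ℝ) [IsFiniteMeasure m]
    (hv : Integrable (fun v : ℝ => v) m) (θ : ℝ) :
    charFun (ccp c m) θ = Complex.exp (c *
      ∫ v, (Complex.exp (θ * v * Complex.I) - 1 - θ * v * Complex.I) ∂m) := by
  unfold ccp
  rw [charFun_map_add_const, cpLaw_char c hc, ← Complex.exp_add]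
  congr 1
  have hv' : Integrable (fun v : ℝ => (θ * v * Complex.I : ℂ)) m :=
    (hv.ofReal.const_mul _).mul_const _
  have hs : Integrable (fun v : ℝ => Complex.exp (θ * v * Complex.I) - 1) m :=
    (char_integrable m θ).sub (integrable_const _)
  rw [integral_sub hs hv',
    integral_sub (char_integrable m θ) (integrable_const _), integral_mul_const,
    integral_const_mul, integral_complex_ofReal]
  simp
  ring

lemma ccp_mgf (c : ℝ) (hc : 0 ≤ c) (m : Measure ℝ) [IsFiniteMeasure m]
    (hv : Integrable (fun v : ℝ => v) m) (l : ℝ)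
    (hi : Integrable (fun v => Real.exp (l * v)) m) :
    ∫⁻ x, ENNReal.ofReal (Real.exp (l * x)) ∂(ccp c m)
      = ENNReal.ofReal (Real.exp (c * ∫ v, (Real.exp (l * v) - 1 - l * v) ∂m)) := by
  unfold ccp
  rw [lintegral_map (by fun_prop) (by fun_prop)]
  have h1 : ∀ x : ℝ, ENNReal.ofReal (Real.exp (l * (x + -(c * ∫ v, v ∂m))))
      = ENNReal.ofReal (Real.exp (-(l * (c * ∫ v, v ∂m)))) * ENNReal.ofReal (Real.exp (l * x)) := by
    intro x
    rw [← ENNReal.ofReal_mul (by positivity), ← Real.exp_add]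
    congr 2; ring
  simp_rw [h1]
  have hs : Integrable (fun v : ℝ => Real.exp (l * v) - 1) m := hi.sub (integrable_const _)
  rw [lintegral_const_mul _ (by fun_prop), cpLaw_mgf c hc m l hi, ← ENNReal.ofReal_mul (by positivity),
    ← Real.exp_add, integral_sub hs (hv.const_mul _),
    integral_sub hi (integrable_const _), integral_const_mul]
  congr 2
  simp
  ring

lemma exp_bound2 (x : ℝ) : Real.exp x - 1 - x ≤ x ^ 2 * Real.exp |x| := by
  have h := Complex.norm_exp_sub_sum_le_norm_mul_exp (x : ℂ) 2
  simp only [Finset.sum_range_succ, Finset.range_zero, Finset.sum_empty] at h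
  have h2 : (Complex.exp x - (0 + (x:ℂ) ^ 0 / (Nat.factorial 0 : ℕ) + (x:ℂ) ^ 1 / (Nat.factorial 1 : ℕ)))
      = ((Real.exp x - 1 - x : ℝ) : ℂ) := by
    push_cast; simp; ring
  rw [h2, Complex.norm_real, Complex.norm_real] at h
  simp only [Real.norm_eq_abs, sq_abs] at h
  exact (le_abs_self _).trans h

lemma ccp_tail (c : ℝ) (hc : 0 ≤ c) (m : Measure ℝ) [IsFiniteMeasure m] (δ C : ℝ)
    (hm : ∀ᵐ v ∂m, 0 ≤ v ∧ v ≤ δ) (hC : ∫ v, v ^ 2 ∂m ≤ C)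
    (l : ℝ) (S : Set ℝ) (η : ℝ) (hS : ∀ x ∈ S, η ≤ l * x) :
    ccp c m S ≤ ENNReal.ofReal (Real.exp (-η + c * (l ^ 2 * Real.exp (|l| * δ) * C))) := by
  have hv : Integrable (fun v : ℝ => v) m := by
    refine Integrable.of_bound (by fun_prop) δ ?_
    filter_upwards [hm] with v hv
    rw [Real.norm_eq_abs, abs_of_nonneg hv.1]; exact hv.2
  have hv2 : Integrable (fun v : ℝ => v ^ 2) m := by
    refine Integrable.of_bound (by fun_prop) (δ ^ 2) ?_
    filter_upwards [hm] with v hv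
    rw [Real.norm_eq_abs, abs_of_nonneg (by positivity)]
    exact pow_le_pow_left₀ hv.1 hv.2 2
  have hlv : ∀ᵐ v ∂m, |l * v| ≤ |l| * δ := by
    filter_upwards [hm] with v hv
    rw [abs_mul, abs_of_nonneg hv.1]
    exact mul_le_mul_of_nonneg_left hv.2 (abs_nonneg _)
  have hi : Integrable (fun v => Real.exp (l * v)) m := by
    refine Integrable.of_bound (by fun_prop) (Real.exp (|l| * δ)) ?_
    filter_upwards [hlv] with v hv
    rw [Real.norm_eq_abs, Real.abs_exp]
    exact Real.exp_le_exp.2 ((le_abs_self _).trans hv)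
  have h1 : ∫ v, (Real.exp (l * v) - 1 - l * v) ∂m ≤ l ^ 2 * Real.exp (|l| * δ) * C := by
    calc ∫ v, (Real.exp (l * v) - 1 - l * v) ∂m
        ≤ ∫ v, l ^ 2 * Real.exp (|l| * δ) * v ^ 2 ∂m := by
          refine integral_mono_ae ((hi.sub (integrable_const _)).sub (hv.const_mul _))
            (hv2.const_mul _) ?_
          filter_upwards [hlv] with v hv
          refine (exp_bound2 _).trans ?_
          have : Real.exp |l * v| ≤ Real.exp (|l| * δ) := Real.exp_le_exp.2 hv
          calc (l * v) ^ 2 * Real.exp |l * v| ≤ (l * v) ^ 2 * Real.exp (|l| * δ) := by gcongr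
            _ = _ := by ring
      _ = l ^ 2 * Real.exp (|l| * δ) * ∫ v, v ^ 2 ∂m := integral_const_mul _ _
      _ ≤ _ := by gcongr
  have h2 := ccp_mgf c hc m hv l hi
  have h3 : ENNReal.ofReal (Real.exp η) * ccp c m S
      ≤ ENNReal.ofReal (Real.exp (c * ∫ v, (Real.exp (l * v) - 1 - l * v) ∂m)) := by
    rw [← h2]
    refine le_trans ?_ (mul_meas_ge_le_lintegral (by fun_prop) (ENNReal.ofReal (Real.exp η)))
    gcongr
    intro x hx
    exact ENNReal.ofReal_le_ofReal (Real.exp_le_exp.2 (hS x hx))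
  calc ccp c m S = ENNReal.ofReal (Real.exp (-η)) * (ENNReal.ofReal (Real.exp η) * ccp c m S) := by
        rw [← mul_assoc, ← ENNReal.ofReal_mul (by positivity), ← Real.exp_add]; simp
    _ ≤ ENNReal.ofReal (Real.exp (-η)) *
        ENNReal.ofReal (Real.exp (c * (l ^ 2 * Real.exp (|l| * δ) * C))) := by
        gcongr
        exact h3.trans (ENNReal.ofReal_le_ofReal (Real.exp_le_exp.2 (by gcongr)))
    _ = _ := by rw [← ENNReal.ofReal_mul (by positivity), ← Real.exp_add]


lemma conv_upper (μ ν : Measure ℝ) [IsProbabilityMeasure μ] [IsProbabilityMeasure ν] (x η : ℝ) :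
    (μ.conv ν) (Ioi x) ≤ μ (Ici η) + ν (Ioi (x - η)) := by
  unfold Measure.conv
  rw [Measure.map_apply (by fun_prop) measurableSet_Ioi]
  calc (μ.prod ν) ((fun p : ℝ × ℝ => p.1 + p.2) ⁻¹' Ioi x)
      ≤ (μ.prod ν) (Ici η ×ˢ univ ∪ univ ×ˢ Ioi (x - η)) := by
        apply measure_mono
        rintro ⟨a, b⟩ h
        simp only [mem_preimage, mem_Ioi, mem_union, mem_prod, mem_Ici, mem_univ] at h ⊢
        by_cases h1 : η ≤ a
        · simp [h1]
        · right; simp; linarith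
    _ ≤ _ := (measure_union_le _ _).trans (by simp [Measure.prod_prod])

lemma conv_lower (μ ν : Measure ℝ) [IsProbabilityMeasure μ] [IsProbabilityMeasure ν] (x η : ℝ) :
    μ (Ioi (-η)) * ν (Ici (x + η)) ≤ (μ.conv ν) (Ici x) := by
  unfold Measure.conv
  rw [Measure.map_apply (by fun_prop) measurableSet_Ici, ← Measure.prod_prod]
  apply measure_mono
  rintro ⟨a, b⟩ h
  simp only [mem_preimage, mem_Ioi, mem_prod, mem_Ici] at h ⊢
  linarith

lemma cexp_bound2 (y : ℝ) : ‖Complex.exp (y * Complex.I) - 1 - y * Complex.I‖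
    ≤ y ^ 2 * Real.exp |y| := by
  have h := Complex.norm_exp_sub_sum_le_norm_mul_exp (y * Complex.I) 2
  simp only [Finset.sum_range_succ, Finset.range_zero, Finset.sum_empty] at h
  simp at h
  rwa [← sub_sub] at h

lemma levy_integrable (Λ : Measure ℝ) (M : ℝ) (h0 : ∀ᵐ v ∂Λ, 0 < v ∧ v ≤ M)
    (hsq : Integrable (fun v : ℝ => v ^ 2) Λ) (θ : ℝ) :
    Integrable (fun v : ℝ => Complex.exp (θ * v * Complex.I) - 1 - θ * v * Complex.I) Λ := by
  refine Integrable.mono' (hsq.const_mul (θ ^ 2 * Real.exp (|θ| * M))) (by fun_prop) ?_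
  filter_upwards [h0] with v hv
  rw [← Complex.ofReal_mul]
  refine (cexp_bound2 _).trans ?_
  have : |θ * v| ≤ |θ| * M := by
    rw [abs_mul, abs_of_pos hv.1]; exact mul_le_mul_of_nonneg_left hv.2 (abs_nonneg _)
  calc (θ * v) ^ 2 * Real.exp |θ * v| ≤ (θ * v) ^ 2 * Real.exp (|θ| * M) := by gcongr
    _ = _ := by ring

lemma levy_fin (Λ : Measure ℝ) (hsq : Integrable (fun v : ℝ => v ^ 2) Λ) (d : ℝ) (hd : 0 < d) :
    Λ (Ici d) < ⊤ := by
  refine lt_of_le_of_lt (measure_mono ?_) (hsq.measure_ge_lt_top (ε := d ^ 2) (by positivity))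
  intro v hv
  exact pow_le_pow_left₀ hd.le hv 2

noncomputable def appLaw (Λ : Measure ℝ) (ε δ : ℝ) (k : ℕ) : Measure ℝ :=
  (ccp ε (Λ.restrict (Ico (δ / (k + 2)) δ))).conv (ccp ε (Λ.restrict (Ici δ)))

section
variable (Λ : Measure ℝ) (M : ℝ) (h0 : ∀ᵐ v ∂Λ, 0 < v ∧ v ≤ M)
    (hsq : Integrable (fun v : ℝ => v ^ 2) Λ) (ε δ : ℝ) (hε : 0 ≤ ε) (hδ : 0 < δ)

lemma big_fin (hsq : Integrable (fun v : ℝ => v ^ 2) Λ) (hδ : 0 < δ) :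
    IsFiniteMeasure (Λ.restrict (Ici δ)) :=
  ⟨by rw [Measure.restrict_apply_univ]; exact levy_fin Λ hsq δ hδ⟩

lemma small_fin (hsq : Integrable (fun v : ℝ => v ^ 2) Λ) (hδ : 0 < δ) (k : ℕ) :
    IsFiniteMeasure (Λ.restrict (Ico (δ / (k + 2)) δ)) :=
  ⟨by
    rw [Measure.restrict_apply_univ]
    exact (measure_mono Ico_subset_Ici_self).trans_lt (levy_fin Λ hsq _ (by positivity))⟩

lemma big_int (h0 : ∀ᵐ v ∂Λ, 0 < v ∧ v ≤ M) (s : Set ℝ) [IsFiniteMeasure (Λ.restrict s)] :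
    Integrable (fun v : ℝ => v) (Λ.restrict s) := by
  refine Integrable.of_bound (by fun_prop) M ?_
  filter_upwards [ae_restrict_of_ae h0] with v hv
  rw [Real.norm_eq_abs, abs_of_pos hv.1]; exact hv.2

lemma appLaw_prob (hsq : Integrable (fun v : ℝ => v ^ 2) Λ) (hε : 0 ≤ ε) (hδ : 0 < δ) (k : ℕ) :
    IsProbabilityMeasure (appLaw Λ ε δ k) := by
  have := big_fin Λ δ hsq hδ
  have := small_fin Λ δ hsq hδ k
  have := ccp_prob ε hε (Λ.restrict (Ico (δ / (k + 2)) δ))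
  have := ccp_prob ε hε (Λ.restrict (Ici δ))
  unfold appLaw
  infer_instance

lemma appLaw_char (h0 : ∀ᵐ v ∂Λ, 0 < v ∧ v ≤ M)
    (hsq : Integrable (fun v : ℝ => v ^ 2) Λ) (hε : 0 ≤ ε) (hδ : 0 < δ) (k : ℕ) (θ : ℝ) :
    charFun (appLaw Λ ε δ k) θ = Complex.exp (ε * ∫ v in Ici (δ / (k + 2)),
      (Complex.exp (θ * v * Complex.I) - 1 - θ * v * Complex.I) ∂Λ) := by
  have := big_fin Λ δ hsq hδ
  have := small_fin Λ δ hsq hδ k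
  have := ccp_prob ε hε (Λ.restrict (Ico (δ / (k + 2)) δ))
  have := ccp_prob ε hε (Λ.restrict (Ici δ))
  have hlevy := levy_integrable Λ M h0 hsq θ
  have hle : δ / (k + 2) ≤ δ := div_le_self hδ.le (by linarith [(Nat.cast_nonneg k : (0:ℝ) ≤ k)])
  unfold appLaw
  rw [charFun_conv, ccp_char ε hε _ (big_int Λ M h0 _), ccp_char ε hε _ (big_int Λ M h0 _),
    ← Complex.exp_add, ← mul_add, ← setIntegral_union _ measurableSet_Ici hlevy.integrableOn
      hlevy.integrableOn, Ico_union_Ici_eq_Ici hle]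
  rw [disjoint_left]
  intro v hv hv'
  exact absurd hv.2 (not_lt.2 hv')

lemma appLaw_tendsto (h0 : ∀ᵐ v ∂Λ, 0 < v ∧ v ≤ M)
    (hsq : Integrable (fun v : ℝ => v ^ 2) Λ) (hε : 0 ≤ ε) (hδ : 0 < δ)
    (μ : Measure ℝ) [hp : IsProbabilityMeasure μ]
    (hμ : ∀ θ : ℝ, charFun μ θ = Complex.exp (ε * ∫ v,
      (Complex.exp (θ * v * Complex.I) - 1 - θ * v * Complex.I) ∂Λ)) :
    Tendsto (β := ProbabilityMeasure ℝ)
      (fun k => ⟨appLaw Λ ε δ k, appLaw_prob Λ ε δ hsq hε hδ k⟩) atTop (𝓝 ⟨μ, hp⟩) := by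
  apply ProbabilityMeasure.tendsto_of_tendsto_charFun
  intro θ
  simp only [ProbabilityMeasure.coe_mk]
  simp_rw [appLaw_char Λ M ε δ h0 hsq hε hδ, hμ]
  refine (Complex.continuous_exp.tendsto _).comp (Tendsto.const_mul _ ?_)
  have hU : (⋃ k : ℕ, Ici (δ / ((k : ℝ) + 2))) = Ioi 0 := by
    ext v
    simp only [mem_iUnion, mem_Ici, mem_Ioi]
    constructor
    · rintro ⟨k, hk⟩; exact lt_of_lt_of_le (by positivity) hk
    · intro hv
      obtain ⟨k, hk⟩ := exists_nat_gt (δ / v)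
      refine ⟨k, ?_⟩
      rw [div_lt_iff₀ hv] at hk
      rw [div_le_iff₀ (by positivity)]
      nlinarith
  have := tendsto_setIntegral_of_monotone (μ := Λ) (s := fun k : ℕ => Ici (δ / ((k : ℝ) + 2)))
    (f := fun v : ℝ => Complex.exp (θ * v * Complex.I) - 1 - θ * v * Complex.I)
    (fun k => measurableSet_Ici) (fun i j hij => Ici_subset_Ici.2 (by gcongr))
    (levy_integrable Λ M h0 hsq θ).integrableOn
  rw [hU] at this
  convert this using 2
  rw [Measure.restrict_eq_self_of_ae_mem]
  filter_upwards [h0] with v hv using hv.1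

lemma app_upper (h0 : ∀ᵐ v ∂Λ, 0 < v ∧ v ≤ M)
    (hsq : Integrable (fun v : ℝ => v ^ 2) Λ) (hε : 0 ≤ ε) (hδ : 0 < δ)
    (μ : Measure ℝ) [hp : IsProbabilityMeasure μ]
    (hμ : ∀ θ : ℝ, charFun μ θ = Complex.exp (ε * ∫ v,
      (Complex.exp (θ * v * Complex.I) - 1 - θ * v * Complex.I) ∂Λ)) (x : ℝ) (K : ℝ≥0∞)
    (hK : ∀ k, appLaw Λ ε δ k (Ioi x) ≤ K) : μ (Ioi x) ≤ K := by
  have h := ProbabilityMeasure.le_liminf_measure_open_of_tendsto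
    (appLaw_tendsto Λ M ε δ h0 hsq hε hδ μ hμ) (isOpen_Ioi (a := x))
  refine h.trans ?_
  refine (liminf_le_liminf (Eventually.of_forall hK)).trans ?_
  simp

lemma app_lower (h0 : ∀ᵐ v ∂Λ, 0 < v ∧ v ≤ M)
    (hsq : Integrable (fun v : ℝ => v ^ 2) Λ) (hε : 0 ≤ ε) (hδ : 0 < δ)
    (μ : Measure ℝ) [hp : IsProbabilityMeasure μ]
    (hμ : ∀ θ : ℝ, charFun μ θ = Complex.exp (ε * ∫ v,
      (Complex.exp (θ * v * Complex.I) - 1 - θ * v * Complex.I) ∂Λ)) (x : ℝ) (K : ℝ≥0∞)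
    (hK : ∀ k, K ≤ appLaw Λ ε δ k (Ici x)) : K ≤ μ (Ici x) := by
  have h := ProbabilityMeasure.limsup_measure_closed_le_of_tendsto
    (appLaw_tendsto Λ M ε δ h0 hsq hε hδ μ hμ) (isClosed_Ici (a := x))
  refine le_trans ?_ h
  refine le_trans ?_ (limsup_le_limsup (Eventually.of_forall hK))
  simp
end


lemma cpow_univ (m : Measure ℝ) [IsFiniteMeasure m] (j : ℕ) :
    cpow m j univ = ENNReal.ofReal (m.real univ ^ j) := by
  have := cpow_mgf m 0 (by simp) j
  simpa using this

lemma cpow_zero (m : Measure ℝ) [IsFiniteMeasure m] (M : ℝ) (hM : 0 ≤ M)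
    (hm : ∀ᵐ v ∂m, v ≤ M) (n j : ℕ) (hj : j < n) (x : ℝ) (hx : (n - 1) * M < x) :
    cpow m j (Ici x) = 0 := by
  unfold cpow
  rw [Measure.map_apply (by fun_prop) measurableSet_Ici]
  have h1 : ∀ᵐ y ∂(Measure.pi fun _ : Fin j => m), ∀ i, y i ≤ M := by
    rw [ae_all_iff]
    intro i
    exact (Measure.tendsto_eval_ae_ae (μ := fun _ : Fin j => m) (i := i)).eventually hm
  rw [measure_eq_zero_iff_ae_notMem]
  filter_upwards [h1] with y hy hy'
  simp only [mem_preimage, mem_Ici] at hy'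
  have : ∑ i, y i ≤ j * M := by
    calc ∑ i, y i ≤ ∑ i : Fin j, M := Finset.sum_le_sum fun i _ => hy i
      _ = j * M := by simp
  have hj' : (j : ℝ) ≤ n - 1 := by
    have : (j : ℝ) + 1 ≤ n := by exact_mod_cast hj
    linarith
  nlinarith

lemma cpLaw_upper (m : Measure ℝ) [IsFiniteMeasure m] (M : ℝ) (hM : 0 ≤ M)
    (hm : ∀ᵐ v ∂m, v ≤ M) (n : ℕ) (x : ℝ) (hx : (n - 1) * M < x) (ε : ℝ) (h0 : 0 ≤ ε)
    (h1 : ε ≤ 1) :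
    cpLaw ε m (Ici x) ≤ ENNReal.ofReal (ε ^ n / n.factorial) * cpow m n (Ici x)
      + ENNReal.ofReal (ε ^ (n + 1) * Real.exp (m.real univ)) := by
  set c := m.real univ with hc
  have hc0 : 0 ≤ c := measureReal_nonneg
  unfold cpLaw
  rw [Measure.sum_apply _ measurableSet_Ici]
  simp only [Measure.smul_apply, smul_eq_mul]
  have hs0 : HasSum (fun j : ℕ => c ^ j / j.factorial) (Real.exp c) := by
    rw [Real.exp_eq_exp_ℝ]
    exact NormedSpace.expSeries_div_hasSum_exp _
  have hs : HasSum (fun j : ℕ => ε ^ (n + 1) * (c ^ j / j.factorial))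
      (ε ^ (n + 1) * Real.exp c) := hs0.mul_left _
  have he : Real.exp (-(ε * c)) ≤ 1 := Real.exp_le_one_iff.2 (by nlinarith)
  calc _ ≤ ∑' j : ℕ, ((if j = n then ENNReal.ofReal (ε ^ n / n.factorial) * cpow m n (Ici x) else 0)
        + ENNReal.ofReal (ε ^ (n + 1) * (c ^ j / j.factorial))) := by
        refine ENNReal.tsum_le_tsum fun j => ?_
        rcases lt_trichotomy j n with h | h | h
        · rw [cpow_zero m M hM hm n j h x hx]; simp
        · subst h
          simp only [if_true]
          refine le_add_right ?_
          gcongr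
          exact mul_le_of_le_one_left (by positivity) he
        · simp only [h.ne', if_false, zero_add]
          calc _ ≤ ENNReal.ofReal (Real.exp (-(ε * c)) * ε ^ j / j.factorial) * cpow m j univ := by
                gcongr; exact subset_univ _
            _ = ENNReal.ofReal (Real.exp (-(ε * c)) * ε ^ j / j.factorial * c ^ j) := by
                rw [cpow_univ, ← ENNReal.ofReal_mul (by positivity)]
            _ ≤ _ := by
                apply ENNReal.ofReal_le_ofReal
                have : ε ^ j ≤ ε ^ (n + 1) := pow_le_pow_of_le_one h0 h1 h
                calc _ = Real.exp (-(ε * c)) * ε ^ j * (c ^ j / j.factorial) := by ring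
                  _ ≤ 1 * ε ^ (n + 1) * (c ^ j / j.factorial) := by gcongr
                  _ = _ := by ring
    _ = _ := by
        rw [ENNReal.tsum_add, tsum_ite_eq, ← ENNReal.ofReal_tsum_of_nonneg _ hs.summable, hs.tsum_eq]
        intro j; positivity

lemma cpLaw_lower (m : Measure ℝ) (n : ℕ) (x : ℝ) (ε : ℝ) :
    ENNReal.ofReal (Real.exp (-(ε * m.real univ)) * ε ^ n / n.factorial) * cpow m n (Ici x)
      ≤ cpLaw ε m (Ici x) := by
  unfold cpLaw
  rw [Measure.sum_apply _ measurableSet_Ici]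
  exact ENNReal.le_tsum (f := fun j : ℕ => (ENNReal.ofReal (Real.exp (-(ε * m.real univ)) * ε ^ j / j.factorial) • cpow m j) (Ici x)) n

lemma ccp_Ioi_le (m : Measure ℝ) (hm : ∀ᵐ v ∂m, 0 ≤ v) (ε : ℝ) (hε : 0 ≤ ε) (y : ℝ) :
    ccp ε m (Ioi y) ≤ cpLaw ε m (Ici y) := by
  unfold ccp
  rw [Measure.map_apply (by fun_prop) measurableSet_Ioi]
  apply measure_mono
  intro x hx
  have : 0 ≤ ∫ v, v ∂m := integral_nonneg_of_ae hm
  simp only [mem_preimage, mem_Ioi, mem_Ici] at hx ⊢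
  nlinarith [mul_nonneg hε this]

lemma le_ccp_Ici (m : Measure ℝ) (ε η : ℝ) (h : ε * ∫ v, v ∂m ≤ η) (y : ℝ) :
    cpLaw ε m (Ici (y + η)) ≤ ccp ε m (Ici y) := by
  unfold ccp
  rw [Measure.map_apply (by fun_prop) measurableSet_Ici]
  apply measure_mono
  intro x hx
  simp only [mem_preimage, mem_Ici] at hx ⊢
  linarith

lemma log_tend (A : ℝ) : ∀ᶠ ε in 𝓝[>] (0:ℝ), A * (Real.log ε) ^ 2 * ε ^ (1/2 : ℝ) ≤ 1 := by
  have h : Tendsto (fun ε : ℝ => Real.log ε * ε ^ (1/4 : ℝ)) (𝓝[>] 0) (𝓝 0) :=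
    tendsto_log_mul_rpow_nhdsGT_zero (by norm_num)
  have h2 := ((h.mul h).const_mul A)
  simp only [mul_zero] at h2
  have h3 := h2.eventually (eventually_le_nhds (show (0:ℝ) < 1 by norm_num))
  filter_upwards [h3, self_mem_nhdsWithin] with ε h hε
  have : ε ^ (1/2 : ℝ) = ε ^ (1/4 : ℝ) * ε ^ (1/4 : ℝ) := by
    rw [← Real.rpow_add hε]; norm_num
  rw [this]
  calc _ = _ := by ring
    _ ≤ 1 := h

lemma small_tail (Λ : Measure ℝ) (M : ℝ) (h0 : ∀ᵐ v ∂Λ, 0 < v ∧ v ≤ M)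
    (hsq : Integrable (fun v : ℝ => v ^ 2) Λ) (n : ℕ) (δ η : ℝ) (hδ : 0 < δ) (hη : 0 < η)
    (hδη : δ * (2 * (n + 1)) ≤ η) :
    ∀ᶠ ε in 𝓝[>] (0:ℝ), ∀ k : ℕ,
      ccp ε (Λ.restrict (Ico (δ / (k + 2)) δ)) (Ici η) ≤ ENNReal.ofReal (Real.exp 1 * ε ^ (n + 1))
      ∧ ccp ε (Λ.restrict (Ico (δ / (k + 2)) δ)) (Iic (-η))
        ≤ ENNReal.ofReal (Real.exp 1 * ε ^ (n + 1)) := by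
  set C := ∫ v, v ^ 2 ∂Λ with hC
  have hC0 : 0 ≤ C := integral_nonneg fun v => sq_nonneg v
  have hlt : ∀ᶠ ε in 𝓝[>] (0:ℝ), ε < 1 :=
    nhdsWithin_le_nhds (eventually_lt_nhds (by norm_num))
  filter_upwards [log_tend (((n + 1) / η) ^ 2 * C), self_mem_nhdsWithin, hlt] with ε h hε hε1 k
  have hε' : (0:ℝ) < ε := hε
  have := small_fin Λ δ hsq hδ k
  have hm : ∀ᵐ v ∂(Λ.restrict (Ico (δ / (k + 2)) δ)), 0 ≤ v ∧ v ≤ δ := by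
    filter_upwards [ae_restrict_mem measurableSet_Ico] with v hv
    exact ⟨le_trans (by positivity) hv.1, hv.2.le⟩
  have hCm : ∫ v, v ^ 2 ∂(Λ.restrict (Ico (δ / (k + 2)) δ)) ≤ C :=
    setIntegral_le_integral hsq (Eventually.of_forall fun v => sq_nonneg v)
  set L := -Real.log ε with hL
  have hL0 : 0 ≤ L := by have := Real.log_neg hε' hε1; linarith
  have key : ∀ l : ℝ, |l| = (n + 1) / η * L →
      Real.exp (-((n + 1) * L) + ε * (l ^ 2 * Real.exp (|l| * δ) * C))
       ≤ Real.exp 1 * ε ^ (n + 1) := by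
    intro l hl
    have h1 : |l| * δ ≤ L / 2 := by
      rw [hl]
      have : (n + 1) / η * L * δ = (δ * (2 * (n + 1))) / η * (L / 2) := by field_simp
      rw [this]
      exact mul_le_of_le_one_left (by linarith) ((div_le_one hη).2 hδη)
    have h2 : Real.exp (|l| * δ) ≤ ε ^ (-(1/2) : ℝ) := by
      rw [Real.rpow_def_of_pos hε']
      apply Real.exp_le_exp.2
      linarith
    have h3 : ε * ε ^ (-(1/2) : ℝ) = ε ^ (1/2 : ℝ) := by
      nth_rw 1 [← Real.rpow_one ε]
      rw [← Real.rpow_add hε']; norm_num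
    have h4 : ε * (l ^ 2 * Real.exp (|l| * δ) * C) ≤ 1 := by
      calc ε * (l ^ 2 * Real.exp (|l| * δ) * C) ≤ ε * (l ^ 2 * ε ^ (-(1/2) : ℝ) * C) := by gcongr
        _ = l ^ 2 * C * (ε * ε ^ (-(1/2) : ℝ)) := by ring
        _ = ((n + 1) / η) ^ 2 * C * (Real.log ε) ^ 2 * ε ^ (1/2 : ℝ) := by
          rw [h3, ← sq_abs l, hl, hL]; ring
        _ ≤ 1 := h
    have h5 : Real.exp (-((n + 1) * L)) = ε ^ (n + 1) := by
      rw [hL, ← Real.rpow_natCast, Real.rpow_def_of_pos hε']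
      congr 1; push_cast; ring
    rw [Real.exp_add, h5, mul_comm]
    gcongr
  have hpos : 0 ≤ (n + 1) / η * L := by positivity
  have hmul : (n + 1) / η * L * η = (n + 1) * L := by field_simp
  constructor
  · refine (ccp_tail ε hε'.le _ δ C hm hCm ((n + 1) / η * L) _ ((n + 1) * L) ?_).trans
      (ENNReal.ofReal_le_ofReal (key _ (abs_of_nonneg hpos)))
    intro x hx
    rw [← hmul]
    exact mul_le_mul_of_nonneg_left hx hpos
  · refine (ccp_tail ε hε'.le _ δ C hm hCm (-((n + 1) / η * L)) _ ((n + 1) * L) ?_).trans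
      (ENNReal.ofReal_le_ofReal (key _ (by rw [abs_neg, abs_of_nonneg hpos])))
    intro x hx
    rw [← hmul, neg_mul, ← mul_neg]
    exact mul_le_mul_of_nonneg_left (by simp only [mem_Iic] at hx; linarith) hpos


lemma core_upper (Λ : Measure ℝ) (M : ℝ) (hM : 0 ≤ M) (h0 : ∀ᵐ v ∂Λ, 0 < v ∧ v ≤ M)
    (hsq : Integrable (fun v : ℝ => v ^ 2) Λ) (n : ℕ) (δ η κ : ℝ) (hδ : 0 < δ) (hη : 0 < η)
    (hδη : δ * (2 * (n + 1)) ≤ η) (hκ : (n - 1) * M < κ - 2 * η) :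
    ∃ K : ℝ, 0 ≤ K ∧ ∀ᶠ ε : ℝ in 𝓝[>] (0:ℝ), ∀ μ : Measure ℝ, IsProbabilityMeasure μ →
      (∀ θ : ℝ, charFun μ θ = Complex.exp (((ε : ℝ) : ℂ) * ∫ v,
        (Complex.exp (θ * v * Complex.I) - 1 - θ * v * Complex.I) ∂Λ)) →
      μ (Ici κ) ≤ ENNReal.ofReal (ε ^ n / n.factorial) *
        cpow (Λ.restrict (Ici δ)) n (Ici (κ - 2 * η)) + ENNReal.ofReal (K * ε ^ (n + 1)) := by
  have := big_fin Λ δ hsq hδ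
  refine ⟨Real.exp 1 + Real.exp ((Λ.restrict (Ici δ)).real univ), by positivity, ?_⟩
  have hlt : ∀ᶠ ε : ℝ in 𝓝[>] (0:ℝ), ε < 1 :=
    nhdsWithin_le_nhds (eventually_lt_nhds (by norm_num))
  filter_upwards [small_tail Λ M h0 hsq n δ η hδ hη hδη, self_mem_nhdsWithin, hlt]
    with ε hs hε hε1 μ hp hμ
  have hε' : (0:ℝ) < ε := hε
  refine (measure_mono (Ici_subset_Ioi.2 (show κ - η < κ by linarith))).trans ?_
  refine app_upper Λ M ε δ h0 hsq hε'.le hδ μ hμ (κ - η) _ fun k => ?_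
  have := small_fin Λ δ hsq hδ k
  have := ccp_prob ε hε'.le (Λ.restrict (Ico (δ / (k + 2)) δ))
  have := ccp_prob ε hε'.le (Λ.restrict (Ici δ))
  refine (conv_upper _ _ (κ - η) η).trans ?_
  have h1 := ccp_Ioi_le (Λ.restrict (Ici δ))
    (ae_restrict_of_ae (h0.mono fun v hv => hv.1.le)) ε hε'.le (κ - η - η)
  have h2 := cpLaw_upper (Λ.restrict (Ici δ)) M hM
    (ae_restrict_of_ae (h0.mono fun v hv => hv.2)) n (κ - 2 * η) hκ ε hε'.le hε1.le
  rw [show κ - η - η = κ - 2 * η by ring] at h1 ⊢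
  refine (add_le_add (hs k).1 (h1.trans h2)).trans ?_
  rw [add_comm, add_assoc, ← ENNReal.ofReal_add (by positivity) (by positivity)]
  gcongr
  linarith

lemma core_lower (Λ : Measure ℝ) (M : ℝ) (h0 : ∀ᵐ v ∂Λ, 0 < v ∧ v ≤ M)
    (hsq : Integrable (fun v : ℝ => v ^ 2) Λ) (n : ℕ) (δ η κ : ℝ) (hδ : 0 < δ) (hη : 0 < η)
    (hδη : δ * (2 * (n + 1)) ≤ η) :
    ∀ᶠ ε : ℝ in 𝓝[>] (0:ℝ), ∀ μ : Measure ℝ, IsProbabilityMeasure μ →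
      (∀ θ : ℝ, charFun μ θ = Complex.exp (((ε : ℝ) : ℂ) * ∫ v,
        (Complex.exp (θ * v * Complex.I) - 1 - θ * v * Complex.I) ∂Λ)) →
      ENNReal.ofReal ((1 - Real.exp 1 * ε ^ (n + 1)) *
        (Real.exp (-(ε * (Λ.restrict (Ici δ)).real univ)) * ε ^ n / n.factorial)) *
        cpow (Λ.restrict (Ici δ)) n (Ici (κ + 2 * η)) ≤ μ (Ici κ) := by
  have := big_fin Λ δ hsq hδ
  have hlt : ∀ᶠ ε : ℝ in 𝓝[>] (0:ℝ), ε * ∫ v, v ∂(Λ.restrict (Ici δ)) ≤ η := by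
    have : Tendsto (fun ε : ℝ => ε * ∫ v, v ∂(Λ.restrict (Ici δ))) (𝓝 0) (𝓝 0) := by
      have := (tendsto_id (α := ℝ) (x := 𝓝 0)).mul_const (∫ v, v ∂(Λ.restrict (Ici δ)))
      simpa using this
    exact nhdsWithin_le_nhds (this.eventually (eventually_le_nhds hη))
  filter_upwards [small_tail Λ M h0 hsq n δ η hδ hη hδη, self_mem_nhdsWithin, hlt]
    with ε hs hε hε1 μ hp hμ
  have hε' : (0:ℝ) < ε := hε
  refine app_lower Λ M ε δ h0 hsq hε'.le hδ μ hμ κ _ fun k => ?_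
  have := small_fin Λ δ hsq hδ k
  have := ccp_prob ε hε'.le (Λ.restrict (Ico (δ / (k + 2)) δ))
  have := ccp_prob ε hε'.le (Λ.restrict (Ici δ))
  refine le_trans ?_ (conv_lower _ _ κ η)
  have h1 := le_ccp_Ici (Λ.restrict (Ici δ)) ε η hε1 (κ + η)
  rw [show κ + η + η = κ + 2 * η by ring] at h1
  have h2 := (cpLaw_lower (Λ.restrict (Ici δ)) n (κ + 2 * η) ε).trans h1
  have h3 : ENNReal.ofReal (1 - Real.exp 1 * ε ^ (n + 1))
      ≤ ccp ε (Λ.restrict (Ico (δ / (k + 2)) δ)) (Ioi (-η)) := by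
    rw [← compl_Iic, prob_compl_eq_one_sub measurableSet_Iic,
      ENNReal.ofReal_sub _ (by positivity), ENNReal.ofReal_one]
    exact tsub_le_tsub_left (hs k).2 _
  rw [ENNReal.ofReal_mul' (by positivity), mul_assoc]
  exact mul_le_mul' h3 h2

lemma Ici_cont (F : Measure ℝ) [IsFiniteMeasure F] (κ : ℝ) (h : F {κ} = 0) :
    Tendsto (fun x => F (Ici x)) (𝓝 κ) (𝓝 (F (Ici κ))) := by
  refine tendsto_measure_of_ae_tendsto_indicator_of_isFiniteMeasure (𝓝 κ) measurableSet_Ici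
    (fun _ => measurableSet_Ici) ?_
  have : ∀ᵐ y ∂F, y ≠ κ := by
    rw [ae_iff]; simpa using h
  filter_upwards [this] with y hy
  rcases lt_or_gt_of_ne hy with h | h
  · filter_upwards [eventually_gt_nhds h] with x hx
    simp [not_le.2 hx, not_le.2 h]
  · filter_upwards [eventually_lt_nhds h] with x hx
    simp [hx.le, h.le]

lemma core (Λ : Measure ℝ) (M : ℝ) (hM : 0 ≤ M) (h0 : ∀ᵐ v ∂Λ, 0 < v ∧ v ≤ M)
    (hsq : Integrable (fun v : ℝ => v ^ 2) Λ) (n : ℕ) (κ : ℝ) (hκ : (n - 1) * M < κ)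
    (G : ℝ → ℝ≥0∞)
    (hG : ∀ δ x, 0 < δ → (n - 1) * M + δ < x → cpow (Λ.restrict (Ici δ)) n (Ici x) = G x)
    (hat : ∀ δ, 0 < δ → cpow (Λ.restrict (Ici δ)) n {κ} = 0) :
    G κ ≠ ⊤ ∧
    (∀ u : ℝ, (G κ).toReal / n.factorial < u →
      ∀ᶠ ε : ℝ in 𝓝[>] (0:ℝ), ∀ μ : Measure ℝ, IsProbabilityMeasure μ →
      (∀ θ : ℝ, charFun μ θ = Complex.exp (((ε : ℝ) : ℂ) * ∫ v,
        (Complex.exp (θ * v * Complex.I) - 1 - θ * v * Complex.I) ∂Λ)) →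
      (μ (Ici κ)).toReal / ε ^ n < u) ∧
    (∀ u : ℝ, u < (G κ).toReal / n.factorial →
      ∀ᶠ ε : ℝ in 𝓝[>] (0:ℝ), ∀ μ : Measure ℝ, IsProbabilityMeasure μ →
      (∀ θ : ℝ, charFun μ θ = Complex.exp (((ε : ℝ) : ℂ) * ∫ v,
        (Complex.exp (θ * v * Complex.I) - 1 - θ * v * Complex.I) ∂Λ)) →
      u < (μ (Ici κ)).toReal / ε ^ n) := by
  set d := (κ - (n - 1) * M) / 2 with hd
  have hd0 : 0 < d := by rw [hd]; linarith
  have hfin : ∀ δ, 0 < δ → IsFiniteMeasure (cpow (Λ.restrict (Ici δ)) n) := by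
    intro δ hδ
    have := big_fin Λ δ hsq hδ
    exact ⟨by rw [cpow_univ]; exact ENNReal.ofReal_lt_top⟩
  have hF := hfin d hd0
  have hGF : ∀ x, κ - d < x → G x = cpow (Λ.restrict (Ici d)) n (Ici x) := by
    intro x hx
    exact (hG d x hd0 (by linarith)).symm
  have hGtop : ∀ x, κ - d < x → G x ≠ ⊤ := fun x hx => by
    rw [hGF x hx]; exact measure_ne_top _ _
  have hcont : Tendsto (fun x => (G x).toReal / n.factorial) (𝓝 κ) (𝓝 ((G κ).toReal / n.factorial)) := by
    refine Tendsto.div_const ?_ _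
    refine (ENNReal.tendsto_toReal (hGtop κ (by linarith))).comp ?_
    have := Ici_cont (cpow (Λ.restrict (Ici d)) n) κ (hat d hd0)
    rw [← hGF κ (by linarith)] at this
    refine this.congr' ?_
    filter_upwards [eventually_gt_nhds (show κ - d < κ by linarith)] with x hx
    exact (hGF x hx).symm
  have hp2 : Tendsto (fun η : ℝ => κ - 2 * η) (𝓝[>] 0) (𝓝 κ) := by
    have : Tendsto (fun η : ℝ => κ - 2 * η) (𝓝 0) (𝓝 (κ - 2 * 0)) := by
      apply Continuous.tendsto; fun_prop
    simp only [mul_zero, sub_zero] at this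
    exact this.mono_left nhdsWithin_le_nhds
  have hp3 : Tendsto (fun η : ℝ => κ + 2 * η) (𝓝[>] 0) (𝓝 κ) := by
    have : Tendsto (fun η : ℝ => κ + 2 * η) (𝓝 0) (𝓝 (κ + 2 * 0)) := by
      apply Continuous.tendsto; fun_prop
    simp only [mul_zero, add_zero] at this
    exact this.mono_left nhdsWithin_le_nhds
  have hn1 : (0:ℝ) < 2 * (n + 1) := by positivity
  have hδd : ∀ η : ℝ, 0 < η → η / (2 * (n + 1)) ≤ η := fun η hη =>
    div_le_self hη.le (by linarith [(Nat.cast_nonneg n : (0:ℝ) ≤ n)])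
  refine ⟨hGtop κ (by linarith), ?_, ?_⟩
  · intro u hu
    have e1 := (hcont.comp hp2).eventually (eventually_lt_nhds hu)
    have e2 : ∀ᶠ η in 𝓝[>] (0:ℝ), η < d / 4 := nhdsWithin_le_nhds (eventually_lt_nhds (by linarith))
    obtain ⟨η, ⟨he1, he2⟩, hη⟩ := ((e1.and e2).and self_mem_nhdsWithin).exists
    have hη : 0 < η := hη
    simp only [Function.comp] at he1
    set δ := η / (2 * (n + 1)) with hδdef
    have hδ : 0 < δ := by positivity
    have hδη := hδd η hη
    obtain ⟨K, hK, hev⟩ := core_upper Λ M hM h0 hsq n δ η κ hδ hη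
      (by rw [hδdef]; field_simp; rfl) (by linarith)
    have e3 : ∀ᶠ ε : ℝ in 𝓝[>] (0:ℝ), (G (κ - 2 * η)).toReal / n.factorial + K * ε < u := by
      have : Tendsto (fun ε : ℝ => (G (κ - 2 * η)).toReal / n.factorial + K * ε) (𝓝 0)
          (𝓝 ((G (κ - 2 * η)).toReal / n.factorial + K * 0)) := by
        apply Continuous.tendsto; fun_prop
      simp only [mul_zero, add_zero] at this
      exact nhdsWithin_le_nhds (this.eventually (eventually_lt_nhds he1))
    filter_upwards [hev, e3, self_mem_nhdsWithin] with ε h1 h2 hε μ hp hμ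
    have hε' : (0:ℝ) < ε := hε
    have h3 := h1 μ hp hμ
    rw [hG δ _ hδ (by linarith)] at h3
    have h4 := ENNReal.toReal_mono (by finiteness [hGtop (κ - 2 * η) (by linarith)]) h3
    rw [ENNReal.toReal_add (by finiteness [hGtop (κ - 2 * η) (by linarith)]) (by finiteness),
      ENNReal.toReal_mul, ENNReal.toReal_ofReal (by positivity),
      ENNReal.toReal_ofReal (by positivity)] at h4
    rw [div_lt_iff₀ (by positivity)]
    refine lt_of_le_of_lt h4 ?_
    calc _ = ((G (κ - 2 * η)).toReal / n.factorial + K * ε) * ε ^ n := by ring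
      _ < _ := by gcongr
  · intro u hu
    have e1 := (hcont.comp hp3).eventually (eventually_gt_nhds hu)
    obtain ⟨η, he1, hη⟩ := (e1.and self_mem_nhdsWithin).exists
    have hη : 0 < η := hη
    simp only [Function.comp] at he1
    set δ := min d (η / (2 * (n + 1))) with hδdef
    have hδ : 0 < δ := lt_min hd0 (by positivity)
    have hδle : δ ≤ d := min_le_left _ _
    have hev := core_lower Λ M h0 hsq n δ η κ hδ hη
      ((mul_le_mul_of_nonneg_right (min_le_right _ _) hn1.le).trans (by field_simp; rfl))
    generalize (Λ.restrict (Ici δ)).real univ = c at hev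
    have e3 : ∀ᶠ ε : ℝ in 𝓝[>] (0:ℝ), u < (1 - Real.exp 1 * ε ^ (n + 1)) *
        (Real.exp (-(ε * c))) * ((G (κ + 2 * η)).toReal / n.factorial) := by
      have : Tendsto (fun ε : ℝ => (1 - Real.exp 1 * ε ^ (n + 1)) *
        (Real.exp (-(ε * c))) * ((G (κ + 2 * η)).toReal / n.factorial)) (𝓝 0)
          (𝓝 ((1 - Real.exp 1 * 0 ^ (n + 1)) *
        (Real.exp (-(0 * c))) * ((G (κ + 2 * η)).toReal / n.factorial))) := by
        apply Continuous.tendsto; fun_prop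
      simp at this
      exact nhdsWithin_le_nhds (this.eventually (eventually_gt_nhds he1))
    have e4 : ∀ᶠ ε : ℝ in 𝓝[>] (0:ℝ), 0 < 1 - Real.exp 1 * ε ^ (n + 1) := by
      have : Tendsto (fun ε : ℝ => (1 - Real.exp 1 * ε ^ (n + 1))) (𝓝 0)
          (𝓝 ((1 - Real.exp 1 * 0 ^ (n + 1)))) := by
        apply Continuous.tendsto; fun_prop
      simp at this
      exact nhdsWithin_le_nhds (this.eventually (eventually_gt_nhds one_pos))
    filter_upwards [hev, e3, e4, self_mem_nhdsWithin] with ε h1 h2 h2' hε μ hp hμ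
    have hε' : (0:ℝ) < ε := hε
    have h3 := h1 μ hp hμ
    rw [hG δ _ hδ (by linarith)] at h3
    have h4 := ENNReal.toReal_mono (measure_ne_top _ _) h3
    rw [ENNReal.toReal_mul, ENNReal.toReal_ofReal (by positivity)] at h4
    rw [lt_div_iff₀ (by positivity)]
    refine lt_of_lt_of_le ?_ h4
    calc _ < _ * ε ^ n := mul_lt_mul_of_pos_right h2 (by positivity)
      _ = _ := by ring


lemma lint_rpow (a p : ℝ) (ha : 0 < a) (hp : p < -1) :
    ∫⁻ u in Ici a, ENNReal.ofReal (u ^ p) = ENNReal.ofReal (a ^ (p + 1) / (-(p + 1))) := by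
  rw [setLIntegral_congr Ioi_ae_eq_Ici.symm,
    ← ofReal_integral_eq_lintegral_ofReal (integrableOn_Ioi_rpow_of_lt hp ha),
    integral_Ioi_rpow_of_lt hp ha]
  · congr 1; rw [div_neg, neg_div]
  · filter_upwards [ae_restrict_mem measurableSet_Ioi] with u hu
    exact Real.rpow_nonneg (ha.le.trans (le_of_lt hu)) _

instance muU_sfinite (γ : ℝ) : SFinite (muU γ) := by
  unfold muU; infer_instance

lemma muU_Ici (γ a : ℝ) (hγ1 : 1 < γ) (ha : 0 < a) :
    muU γ (Ici a) = ENNReal.ofReal (a ^ (-γ) / γ) := by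
  unfold muU
  rw [withDensity_apply _ measurableSet_Ici, Measure.restrict_restrict measurableSet_Ici,
    inter_eq_left.2 (Ici_subset_Ioi.2 ha), lint_rpow a _ ha (by linarith)]
  congr 2
  · congr 1; ring
  · ring

lemma muEll_Ici (γ t a : ℝ) (hγ1 : 1 < γ) (ha : 0 < a) (hat : a ≤ t) :
    muEll γ t (Ici a) =
      ENNReal.ofReal (a ^ (1 - γ) / (γ * (γ - 1)) + (t - a) * (a ^ (-γ) / γ)) := by
  have hmeas : Measurable (fun p : ℝ × ℝ => ellK t p.1 p.2) := by unfold ellK; fun_prop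
  unfold muEll
  rw [Measure.restrict_apply measurableSet_Ici, inter_eq_left.2 (Ici_subset_Ioi.2 ha),
    Measure.map_apply hmeas measurableSet_Ici, Measure.prod_apply (hmeas measurableSet_Ici)]
  have h1 : ∀ s : ℝ, muU γ (Prod.mk s ⁻¹' ((fun p : ℝ × ℝ => ellK t p.1 p.2) ⁻¹' Ici a))
      = (Iic 0).indicator (fun s => ENNReal.ofReal ((a - s) ^ (-γ) / γ)) s
        + (Ioc 0 (t - a)).indicator (fun _ => ENNReal.ofReal (a ^ (-γ) / γ)) s := by
    intro s
    have hset : ∀ u, u ∈ (Prod.mk s ⁻¹' ((fun p : ℝ × ℝ => ellK t p.1 p.2) ⁻¹' Ici a)) ↔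
        a ≤ min (s + u) t - max s 0 := by
      intro u
      simp only [mem_preimage, mem_Ici, ellK, le_max_iff]
      constructor
      · rintro (h | h)
        · linarith
        · exact h
      · exact Or.inr
    rcases le_or_gt s 0 with hs | hs
    · have : (Prod.mk s ⁻¹' ((fun p : ℝ × ℝ => ellK t p.1 p.2) ⁻¹' Ici a)) = Ici (a - s) := by
        ext u
        rw [hset, max_eq_right hs, mem_Ici, sub_zero, le_min_iff]
        constructor
        · rintro ⟨h, _⟩; linarith
        · intro h; exact ⟨by linarith, hat⟩
      rw [this, muU_Ici γ _ hγ1 (by linarith), indicator_of_mem (by exact hs),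
        indicator_of_notMem (by simp [hs]), add_zero]
    · rw [indicator_of_notMem (s := Iic 0) (by simpa using hs), zero_add]
      rcases le_or_gt s (t - a) with hs' | hs'
      · have : (Prod.mk s ⁻¹' ((fun p : ℝ × ℝ => ellK t p.1 p.2) ⁻¹' Ici a)) = Ici a := by
          ext u
          rw [hset, max_eq_left hs.le, mem_Ici, le_sub_iff_add_le, le_min_iff]
          constructor
          · rintro ⟨h, _⟩; linarith
          · intro h; exact ⟨by linarith, by linarith⟩
        rw [this, muU_Ici γ _ hγ1 ha, indicator_of_mem (by exact ⟨hs, hs'⟩)]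
      · have : (Prod.mk s ⁻¹' ((fun p : ℝ × ℝ => ellK t p.1 p.2) ⁻¹' Ici a)) = ∅ := by
          ext u
          rw [hset, max_eq_left hs.le, le_sub_iff_add_le, le_min_iff]
          simp only [mem_empty_iff_false, iff_false]
          rintro ⟨_, h⟩; linarith
        rw [this, measure_empty, indicator_of_notMem (by simp; intro _; linarith)]
  simp_rw [h1]
  rw [lintegral_add_left (by measurability), lintegral_indicator measurableSet_Iic,
    lintegral_indicator measurableSet_Ioc, setLIntegral_const, Real.volume_Ioc]
  have h2 : ∫⁻ s in Iic 0, ENNReal.ofReal ((a - s) ^ (-γ) / γ)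
      = ENNReal.ofReal (a ^ (1 - γ) / (γ * (γ - 1))) := by
    have hmp := (Measure.measurePreserving_sub_left (volume : Measure ℝ) a).setLIntegral_comp_preimage
      (s := Ici a) measurableSet_Ici (f := fun y => ENNReal.ofReal (y ^ (-γ) / γ)) (by fun_prop)
    have hs : (fun x => a - x) ⁻¹' Ici a = Iic 0 := by ext; simp
    rw [hs] at hmp
    rw [hmp]
    have : ∀ y : ℝ, ENNReal.ofReal (y ^ (-γ) / γ) = ENNReal.ofReal γ⁻¹ * ENNReal.ofReal (y ^ (-γ)) := by
      intro y
      rw [← ENNReal.ofReal_mul (by positivity)]; congr 1; ring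
    simp_rw [this]
    rw [lintegral_const_mul _ (by fun_prop), lint_rpow a _ ha (by linarith),
      ← ENNReal.ofReal_mul (by positivity)]
    congr 1
    rw [show -γ + 1 = 1 - γ by ring, show -(1 - γ) = γ - 1 by ring]
    have : γ - 1 ≠ 0 := by linarith
    field_simp
  have hg : 0 < γ - 1 := by linarith
  rw [h2, sub_zero, ← ENNReal.ofReal_mul (by positivity), ← ENNReal.ofReal_add (by positivity)
    (mul_nonneg (by positivity) (by linarith)), mul_comm (a ^ (-γ) / γ)]

lemma muEll_Ici_gt (γ t a : ℝ) (ha : 0 < a) (hat : t < a) :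
    muEll γ t (Ici a) = 0 := by
  have hmeas : Measurable (fun p : ℝ × ℝ => ellK t p.1 p.2) := by unfold ellK; fun_prop
  unfold muEll
  rw [Measure.restrict_apply measurableSet_Ici, inter_eq_left.2 (Ici_subset_Ioi.2 ha),
    Measure.map_apply hmeas measurableSet_Ici]
  suffices he : (fun p : ℝ × ℝ => ellK t p.1 p.2) ⁻¹' Ici a = ∅ by rw [he, measure_empty]
  ext ⟨s, u⟩
  simp only [mem_preimage, mem_Ici, ellK, mem_empty_iff_false, iff_false, le_max_iff, not_or, not_le]
  refine ⟨ha, ?_⟩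
  have := min_le_right (s + u) t
  have := le_max_right s 0
  linarith

lemma nuM_Ici (γ c : ℝ) (hγ1 : 1 < γ) (hγ2 : γ < 2) (hc : 0 < c) (hc1 : c ≤ 1) :
    nuM γ (Ici c) =
      ENNReal.ofReal (c ^ (1 - γ) / (γ * (γ - 1)) + (1 - c) * (c ^ (-γ) / γ)) := by
  have hg : 0 < γ - 1 := by linarith
  have h2g : 0 < 2 - γ := by linarith
  have h0 : (0:ℝ) ∉ uIcc c 1 := by
    rw [uIcc_of_le hc1]; intro h; linarith [h.1]
  unfold nuM
  have hset : Ici c ∩ Ioo 0 1 = Ico c 1 := by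
    ext s; simp only [mem_inter_iff, mem_Ici, mem_Ioo, mem_Ico]
    constructor
    · rintro ⟨h1, h2, h3⟩; exact ⟨h1, h3⟩
    · rintro ⟨h1, h2⟩; exact ⟨h1, hc.trans_le h1, h2⟩
  have hi : ∀ p : ℝ, IntervalIntegrable (fun s : ℝ => s ^ p) volume c 1 := fun p =>
    intervalIntegral.intervalIntegrable_rpow (Or.inr h0)
  have hii : IntegrableOn (fun s : ℝ => s ^ (-(γ + 1)) + (2 - γ) / γ * s ^ (-γ)) (Ioc c 1) := by
    have := (hi (-(γ + 1))).add ((hi (-γ)).const_mul ((2 - γ) / γ))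
    exact (intervalIntegrable_iff_integrableOn_Ioc_of_le hc1).1 this
  have hnn : 0 ≤ᵐ[volume.restrict (Ioc c 1)]
      (fun s : ℝ => s ^ (-(γ + 1)) + (2 - γ) / γ * s ^ (-γ)) := by
    filter_upwards [ae_restrict_mem measurableSet_Ioc] with s hs
    have : 0 < s := hc.trans hs.1
    simp only [Pi.zero_apply]
    positivity
  rw [Measure.add_apply, withDensity_apply _ measurableSet_Ici,
    Measure.restrict_restrict measurableSet_Ici, hset, setLIntegral_congr Ico_ae_eq_Ioc,
    ← ofReal_integral_eq_lintegral_ofReal hii hnn, ← intervalIntegral.integral_of_le hc1,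
    intervalIntegral.integral_add (hi _) ((hi _).const_mul _), intervalIntegral.integral_const_mul,
    integral_rpow (Or.inr ⟨by linarith, h0⟩), integral_rpow (Or.inr ⟨by linarith, h0⟩)]
  have hd : (Real.toNNReal (1 / (γ * (γ - 1))) • Measure.dirac (1:ℝ)) (Ici c)
      = ENNReal.ofReal (1 / (γ * (γ - 1))) := by
    rw [Measure.smul_apply, Measure.dirac_apply' _ measurableSet_Ici, indicator_of_mem (by exact hc1)]
    simp [ENNReal.ofReal, ENNReal.smul_def]
  have hval : (1 ^ (-(γ + 1) + 1) - c ^ (-(γ + 1) + 1)) / (-(γ + 1) + 1) +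
      (2 - γ) / γ * ((1 ^ (-γ + 1) - c ^ (-γ + 1)) / (-γ + 1)) + 1 / (γ * (γ - 1))
      = c ^ (1 - γ) / (γ * (γ - 1)) + (1 - c) * (c ^ (-γ) / γ) := by
    rw [show -(γ + 1) + 1 = -γ by ring, show -γ + 1 = -(γ - 1) by ring, Real.one_rpow, Real.one_rpow,
      show -(γ - 1) = 1 - γ by ring]
    have : c ^ (1 - γ) = c * c ^ (-γ) := by
      rw [sub_eq_add_neg, Real.rpow_add hc, Real.rpow_one]
    rw [this]
    have h3 : γ - 1 ≠ 0 := hg.ne'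
    have h4 : 1 - γ ≠ 0 := by linarith
    rw [show 1 - γ = -(γ - 1) by ring]
    field_simp
    ring
  rw [hd, ← ENNReal.ofReal_add _ (by positivity), hval]
  have h5 : 0 ≤ ∫ s in c..1, (s ^ (-(γ + 1)) + (2 - γ) / γ * s ^ (-γ)) := by
    rw [intervalIntegral.integral_of_le hc1]; exact integral_nonneg_of_ae hnn
  rwa [intervalIntegral.integral_add (hi _) ((hi _).const_mul _), intervalIntegral.integral_const_mul,
    integral_rpow (Or.inr ⟨by linarith, h0⟩), integral_rpow (Or.inr ⟨by linarith, h0⟩)] at h5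

lemma nuM_ae (γ : ℝ) : ∀ᵐ s ∂(nuM γ), 0 < s ∧ s ≤ 1 := by
  unfold nuM
  rw [ae_add_measure_iff]
  constructor
  · refine (withDensity_absolutelyContinuous _ _).ae_le ?_
    filter_upwards [ae_restrict_mem measurableSet_Ioo] with s hs using ⟨hs.1, hs.2.le⟩
  · refine Measure.ae_smul_measure ?_ _
    rw [ae_dirac_iff]
    · simp
    · exact measurableSet_Ioc

lemma nuM_Ici_gt (γ c : ℝ) (hc : 1 < c) : nuM γ (Ici c) = 0 := by
  rw [measure_eq_zero_iff_ae_notMem]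
  filter_upwards [nuM_ae γ] with s hs h
  exact absurd (lt_of_lt_of_le hc h) (not_lt.2 hs.2)

lemma ext_pos (μ ν : Measure ℝ) (h1 : ∀ᵐ x ∂μ, 0 < x) (h2 : ∀ᵐ x ∂ν, 0 < x)
    (hf : ∀ a, 0 < a → μ (Ici a) ≠ ⊤) (h : ∀ a, 0 < a → μ (Ici a) = ν (Ici a)) : μ = ν := by
  rw [← Measure.restrict_eq_self_of_ae_mem (s := Ioi 0) h1,
    ← Measure.restrict_eq_self_of_ae_mem (s := Ioi 0) h2]
  have hU : (⋃ k : ℕ, Ici (1 / ((k : ℝ) + 1))) = Ioi 0 := by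
    ext v
    simp only [mem_iUnion, mem_Ici, mem_Ioi]
    constructor
    · rintro ⟨k, hk⟩; exact lt_of_lt_of_le (by positivity) hk
    · intro hv
      obtain ⟨k, hk⟩ := exists_nat_one_div_lt hv
      exact ⟨k, hk.le⟩
  rw [← hU, Measure.restrict_iUnion_congr]
  intro k
  have hk : (0:ℝ) < 1 / ((k : ℝ) + 1) := by positivity
  have : IsFiniteMeasure (μ.restrict (Ici (1 / ((k : ℝ) + 1)))) :=
    ⟨by rw [Measure.restrict_apply_univ]; exact (hf _ hk).lt_top⟩
  refine Measure.ext_of_Ici _ _ fun a => ?_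
  rw [Measure.restrict_apply measurableSet_Ici, Measure.restrict_apply measurableSet_Ici, Ici_inter_Ici]
  exact h _ (lt_of_lt_of_le hk le_sup_right)

lemma muEll_eq (γ t : ℝ) (hγ1 : 1 < γ) (hγ2 : γ < 2) (ht : 0 < t) :
    muEll γ t = ENNReal.ofReal (t ^ (1 - γ)) • (nuM γ).map (fun s => t * s) := by
  have hg : 0 < γ - 1 := by linarith
  refine ext_pos _ _ ?_ ?_ ?_ ?_
  · unfold muEll
    exact ae_restrict_mem measurableSet_Ioi
  · refine Measure.ae_smul_measure ?_ _
    rw [ae_map_iff (by fun_prop) measurableSet_Ioi]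
    filter_upwards [nuM_ae γ] with s hs using mul_pos ht hs.1
  · intro a ha
    rcases le_or_gt a t with h | h
    · rw [muEll_Ici γ t a hγ1 ha h]; exact ENNReal.ofReal_ne_top
    · rw [muEll_Ici_gt γ t a ha h]; simp
  · intro a ha
    have hpre : (fun s => t * s) ⁻¹' Ici a = Ici (a / t) := by
      ext s; simp only [mem_preimage, mem_Ici]; rw [div_le_iff₀ ht, mul_comm]
    rw [Measure.smul_apply, Measure.map_apply (by fun_prop) measurableSet_Ici, hpre, smul_eq_mul]
    rcases le_or_gt a t with h | h
    · rw [muEll_Ici γ t a hγ1 ha h, nuM_Ici γ _ hγ1 hγ2 (by positivity) ((div_le_one ht).2 h),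
        ← ENNReal.ofReal_mul (by positivity)]
      congr 1
      rw [Real.div_rpow ha.le ht.le, Real.div_rpow ha.le ht.le]
      have e1 : t ^ (1 - γ) = t * t ^ (-γ) := by
        rw [sub_eq_add_neg, Real.rpow_add ht, Real.rpow_one]
      rw [e1]
      have : t ^ (-γ) ≠ 0 := (Real.rpow_pos_of_pos ht _).ne'
      field_simp
    · rw [muEll_Ici_gt γ t a ha h, nuM_Ici_gt γ _ ((one_lt_div ht).2 h), mul_zero]


lemma nuM_singleton (γ c : ℝ) (hc : c ≠ 1) : nuM γ {c} = 0 := by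
  unfold nuM
  rw [Measure.add_apply, Measure.smul_apply, Measure.dirac_apply' _ (measurableSet_singleton c),
    indicator_of_notMem (by simpa using hc.symm), smul_zero, add_zero]
  refine (withDensity_absolutelyContinuous _ _) ?_
  exact Measure.restrict_le_self.absolutelyContinuous (by simp)

lemma nuM_one (γ : ℝ) (hγ1 : 1 < γ) : nuM γ {1} ≠ 0 := by
  have hg : 0 < γ - 1 := by linarith
  have hp : 0 < 1 / (γ * (γ - 1)) := by positivity
  intro h
  unfold nuM at h
  rw [Measure.add_apply, add_eq_zero, Measure.smul_apply,
    Measure.dirac_apply' _ (measurableSet_singleton (1:ℝ)), indicator_of_mem (by simp)] at h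
  have := h.2
  simp [ENNReal.smul_def] at this
  have hq : 0 < (γ - 1)⁻¹ * γ⁻¹ := by positivity
  linarith

lemma nuM_sq (γ : ℝ) (hγ1 : 1 < γ) (hγ2 : γ < 2) : Integrable (fun s : ℝ => s ^ 2) (nuM γ) := by
  unfold nuM
  have h2g : 0 < 2 - γ := by linarith
  refine Integrable.add_measure ?_ ?_
  · rw [integrable_withDensity_iff (by fun_prop) (ae_of_all _ fun _ => ENNReal.ofReal_lt_top)]
    have hi : ∀ p : ℝ, -1 < p → IntegrableOn (fun s : ℝ => s ^ p) (Ioo 0 1) := fun p hp =>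
      (intervalIntegral.integrableOn_Ioo_rpow_iff (by norm_num)).2 hp
    have := (hi (1 - γ) (by linarith)).add ((hi (2 - γ) (by linarith)).const_mul ((2 - γ) / γ))
    refine this.congr ?_
    filter_upwards [ae_restrict_mem measurableSet_Ioo] with s hs
    have hs0 := hs.1
    rw [ENNReal.toReal_ofReal (by positivity)]
    simp only [Pi.add_apply]
    rw [mul_add, show (1 - γ) = (2:ℕ) + (-(γ + 1)) by push_cast; ring,
      show (2 - γ) = (2:ℕ) + (-γ) by push_cast; ring, Real.rpow_add hs0, Real.rpow_add hs0,
      Real.rpow_natCast]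
    ring
  · refine Integrable.smul_measure_nnreal ?_
    exact integrable_dirac (by simp)

lemma pi_hyper (γ : ℝ) (n : ℕ) (κ : ℝ) (y : Fin n → ℝ) (hy : ∀ i, 0 < y i) (hne : ∑ i, y i ≠ κ) :
    (Measure.pi fun _ : Fin n => nuM γ) {s | ∑ i, y i * s i = κ} = 0 := by
  have hsub : {s : Fin n → ℝ | ∑ i, y i * s i = κ} ⊆
      ⋃ i, {s : Fin n → ℝ | s i ≠ 1 ∧ ∑ i, y i * s i = κ} := by
    intro s hs
    by_contra hcon
    simp only [mem_iUnion, mem_setOf_eq, not_exists, not_and] at hcon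
    apply hne
    have h1 : ∀ i, s i = 1 := fun i => by
      by_contra h; exact hcon i h hs
    have : ∑ i, y i * s i = κ := hs
    simpa [h1] using this
  refine measure_mono_null hsub (measure_iUnion_null fun i => ?_)
  obtain _ | k := n
  · exact i.elim0
  have hms : MeasurableSet {s : Fin (k+1) → ℝ | s i ≠ 1 ∧ ∑ i, y i * s i = κ} :=
    (measurableSet_eq_fun (by fun_prop) measurable_const).compl.inter
      (measurableSet_eq_fun (by fun_prop) measurable_const)
  have hmp := (measurePreserving_piFinSuccAbove (fun _ : Fin (k+1) => nuM γ) i).symm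
  have hms2 := hmp.measurable hms
  rw [← hmp.measure_preimage hms.nullMeasurableSet, Measure.prod_apply_symm hms2,
    lintegral_eq_zero_iff (measurable_measure_prodMk_right hms2)]
  refine ae_of_all _ fun z => ?_
  simp only [Pi.zero_apply]
  by_cases hc : (κ - ∑ j, y (i.succAbove j) * z j) / y i = 1
  · convert measure_empty (μ := nuM γ)
    ext a
    simp only [mem_preimage, mem_setOf_eq, mem_empty_iff_false, iff_false, not_and]
    intro h1 h2
    rw [i.sum_univ_succAbove] at h2
    simp [MeasurableEquiv.piFinSuccAbove, Fin.insertNthEquiv] at h1 h2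
    apply h1
    rw [← hc, eq_div_iff (hy i).ne']
    linarith
  · refine measure_mono_null ?_ (nuM_singleton γ _ hc)
    intro a
    simp only [mem_preimage, mem_setOf_eq, mem_singleton_iff]
    rintro ⟨h1, h2⟩
    rw [i.sum_univ_succAbove] at h2
    simp [MeasurableEquiv.piFinSuccAbove, Fin.insertNthEquiv] at h1 h2
    rw [eq_div_iff (hy i).ne']
    linarith

lemma pi_prod_eq (FR : Measure ℝ) [IsProbabilityMeasure FR] (ν : Measure ℝ) [SigmaFinite ν] (n : ℕ)
    (A : Set ℝ) (hA : MeasurableSet A) :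
    (Measure.pi fun _ : Fin n => FR.prod ν) {p | ∑ i, (p i).1 * (p i).2 ∈ A} =
    ((Measure.pi fun _ : Fin n => FR).prod (Measure.pi fun _ : Fin n => ν))
      {q | ∑ i, q.1 i * q.2 i ∈ A} := by
  have hmp := measurePreserving_arrowProdEquivProdArrow ℝ ℝ (Fin n) (fun _ => FR) (fun _ => ν)
  have hm : MeasurableSet {q : (Fin n → ℝ) × (Fin n → ℝ) | ∑ i, q.1 i * q.2 i ∈ A} := by
    have : Measurable (fun q : (Fin n → ℝ) × (Fin n → ℝ) => ∑ i, q.1 i * q.2 i) := by fun_prop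
    exact this hA
  rw [← hmp.measure_preimage hm.nullMeasurableSet]
  rfl

lemma cpow_lam (m : Measure (ℝ × ℝ)) [SigmaFinite m] (n : ℕ) (δ : ℝ)
    (hfin : IsFiniteMeasure ((m.map (fun p => p.1 * p.2)).restrict (Ici δ)))
    (A : Set ℝ) (hA : MeasurableSet A) :
    cpow ((m.map (fun p => p.1 * p.2)).restrict (Ici δ)) n A =
    (Measure.pi fun _ : Fin n => m) ({p | ∑ i, (p i).1 * (p i).2 ∈ A} ∩ {p | ∀ i, δ ≤ (p i).1 * (p i).2}) := by
  have hmul : Measurable (fun p : ℝ × ℝ => p.1 * p.2) := by fun_prop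
  rw [Measure.restrict_map hmul measurableSet_Ici] at hfin ⊢
  unfold cpow
  rw [← Measure.pi_map_pi (fun _ => hmul.aemeasurable), Measure.map_map (by fun_prop) (by fun_prop),
    ← Measure.restrict_pi_pi, Measure.map_apply (by fun_prop) hA, Measure.restrict_apply']
  · congr 1
    ext p
    simp
  · exact MeasurableSet.univ_pi fun _ => hmul measurableSet_Ici


noncomputable def lam (γ : ℝ) (FR : Measure ℝ) : Measure ℝ :=
  (FR.prod (nuM γ)).map (fun p : ℝ × ℝ => p.1 * p.2)

noncomputable def GG (γ : ℝ) (FR : Measure ℝ) (n : ℕ) (x : ℝ) : ℝ≥0∞ :=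
  (Measure.pi fun _ : Fin n => FR.prod (nuM γ)) {p | ∑ i, (p i).1 * (p i).2 ∈ Ici x}

lemma GG_eq (γ : ℝ) (FR : Measure ℝ) [IsProbabilityMeasure FR] (n : ℕ) (κ : ℝ) :
    GG γ FR n κ = ∫⁻ s : Fin n → ℝ, (Measure.pi fun _ : Fin n => FR) {x | κ ≤ ∑ i, s i * x i}
        ∂(Measure.pi fun _ : Fin n => nuM γ) := by
  unfold GG
  rw [pi_prod_eq _ _ _ _ measurableSet_Ici, Measure.prod_apply_symm]
  · refine lintegral_congr fun s => ?_
    congr 1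
    ext x
    simp only [mem_preimage, mem_setOf_eq, mem_Ici]
    simp_rw [mul_comm]
  · have : Measurable (fun q : (Fin n → ℝ) × (Fin n → ℝ) => ∑ i, q.1 i * q.2 i) := by fun_prop
    exact this measurableSet_Ici

section
variable (γ : ℝ) (FR : Measure ℝ) [IsProbabilityMeasure FR] (M : ℝ)

lemma m0_ae (hM : 0 ≤ M) (hR : ∀ᵐ r ∂FR, 0 < r ∧ r ≤ M) :
    ∀ᵐ p ∂(FR.prod (nuM γ)), 0 < p.1 * p.2 ∧ p.1 * p.2 ≤ M := by
  have h1 : ∀ᵐ p ∂(FR.prod (nuM γ)), 0 < p.1 ∧ p.1 ≤ M :=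
    Measure.quasiMeasurePreserving_fst.ae hR
  have h2 : ∀ᵐ p ∂(FR.prod (nuM γ)), 0 < p.2 ∧ p.2 ≤ 1 :=
    Measure.quasiMeasurePreserving_snd.ae (nuM_ae γ)
  filter_upwards [h1, h2] with p hp hq
  refine ⟨mul_pos hp.1 hq.1, ?_⟩
  calc p.1 * p.2 ≤ M * 1 := mul_le_mul hp.2 hq.2 hq.1.le hM
    _ = M := mul_one M

lemma lam_ae (hM : 0 ≤ M) (hR : ∀ᵐ r ∂FR, 0 < r ∧ r ≤ M) :
    ∀ᵐ v ∂(lam γ FR), 0 < v ∧ v ≤ M := by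
  unfold lam
  rw [ae_map_iff (by fun_prop) measurableSet_Ioc]
  exact m0_ae γ FR M hM hR

lemma lam_sq (hγ1 : 1 < γ) (hγ2 : γ < 2) (hR : ∀ᵐ r ∂FR, 0 < r ∧ r ≤ M) :
    Integrable (fun v : ℝ => v ^ 2) (lam γ FR) := by
  unfold lam
  rw [integrable_map_measure (by fun_prop) (by fun_prop)]
  have h1 : Integrable (fun r : ℝ => r ^ 2) FR := by
    refine Integrable.of_bound (by fun_prop) (M ^ 2) ?_
    filter_upwards [hR] with r hr
    rw [Real.norm_eq_abs, abs_of_nonneg (sq_nonneg r)]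
    exact pow_le_pow_left₀ hr.1.le hr.2 2
  have := h1.mul_prod (nuM_sq γ hγ1 hγ2)
  refine this.congr (ae_of_all _ fun p => ?_)
  simp [mul_pow]

lemma lam_hG (hγ1 : 1 < γ) (hγ2 : γ < 2) (hM : 0 ≤ M) (hR : ∀ᵐ r ∂FR, 0 < r ∧ r ≤ M) (n : ℕ)
    (δ x : ℝ) (hδ : 0 < δ) (hx : (n - 1) * M + δ < x) :
    cpow ((lam γ FR).restrict (Ici δ)) n (Ici x) = GG γ FR n x := by
  have hfin := big_fin (lam γ FR) δ (lam_sq γ FR M hγ1 hγ2 hR) hδ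
  unfold lam at hfin ⊢
  rw [cpow_lam _ n δ hfin _ measurableSet_Ici]
  unfold GG
  refine measure_congr ?_
  have hae : ∀ᵐ p ∂(Measure.pi fun _ : Fin n => FR.prod (nuM γ)), ∀ i,
      0 < (p i).1 * (p i).2 ∧ (p i).1 * (p i).2 ≤ M := by
    rw [ae_all_iff]
    intro i
    exact (Measure.tendsto_eval_ae_ae (μ := fun _ : Fin n => FR.prod (nuM γ)) (i := i)).eventually
      (m0_ae γ FR M hM hR)
  filter_upwards [hae] with p hp
  refine propext (and_iff_left_of_imp ?_)
  intro h i
  have h : x ≤ ∑ i, (p i).1 * (p i).2 := h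
  show δ ≤ (p i).1 * (p i).2
  rw [← Finset.add_sum_erase _ _ (Finset.mem_univ i)] at h
  have h2 : ∑ j ∈ Finset.univ.erase i, (p j).1 * (p j).2 ≤ (n - 1) * M := by
    refine (Finset.sum_le_card_nsmul _ _ M fun j _ => (hp j).2).trans (le_of_eq ?_)
    have hn : 1 ≤ n := i.pos
    rw [Finset.card_erase_of_mem (Finset.mem_univ i), Finset.card_univ, Fintype.card_fin, nsmul_eq_mul,
      Nat.cast_sub hn, Nat.cast_one]
  linarith

lemma lam_hat (hγ1 : 1 < γ) (hγ2 : γ < 2) (hR : ∀ᵐ r ∂FR, 0 < r ∧ r ≤ M) (n : ℕ) (κ : ℝ)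
    (hatom : (Measure.pi fun _ : Fin n => FR) {x | ∑ i, x i = κ} = 0)
    (δ : ℝ) (hδ : 0 < δ) :
    cpow ((lam γ FR).restrict (Ici δ)) n {κ} = 0 := by
  have hfin := big_fin (lam γ FR) δ (lam_sq γ FR M hγ1 hγ2 hR) hδ
  unfold lam at hfin ⊢
  rw [cpow_lam _ n δ hfin _ (measurableSet_singleton κ)]
  refine measure_mono_null inter_subset_left ?_
  have hms : MeasurableSet {q : (Fin n → ℝ) × (Fin n → ℝ) | ∑ i, q.1 i * q.2 i ∈ ({κ} : Set ℝ)} := by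
    have : Measurable (fun q : (Fin n → ℝ) × (Fin n → ℝ) => ∑ i, q.1 i * q.2 i) := by fun_prop
    exact this (measurableSet_singleton κ)
  rw [pi_prod_eq _ _ _ _ (measurableSet_singleton κ), Measure.measure_prod_null hms]
  have hae : ∀ᵐ p ∂(Measure.pi fun _ : Fin n => FR), ∀ i, 0 < p i ∧ p i ≤ M := by
    rw [ae_all_iff]
    intro i
    exact (Measure.tendsto_eval_ae_ae (μ := fun _ : Fin n => FR) (i := i)).eventually hR
  filter_upwards [hae, measure_eq_zero_iff_ae_notMem.1 hatom] with y hy hne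
  exact pi_hyper γ n κ y (fun i => (hy i).1) hne

lemma GG_pos (hγ1 : 1 < γ) (n : ℕ) (hn : 0 < n) (κ : ℝ) (hκ : 0 < κ)
    (hsupp1 : FR (Set.Ici (κ / n)) ≠ 0) : 0 < GG γ FR n κ := by
  have hsub : (univ.pi fun _ : Fin n => Ici (κ / n) ×ˢ ({1} : Set ℝ)) ⊆
      {p : Fin n → ℝ × ℝ | ∑ i, (p i).1 * (p i).2 ∈ Ici κ} := by
    intro p hp
    have h1 : ∀ i, κ / n ≤ (p i).1 * (p i).2 := by
      intro i
      have := hp i (mem_univ i)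
      have h2 : (p i).2 = 1 := this.2
      rw [h2, mul_one]; exact this.1
    show κ ≤ ∑ i, (p i).1 * (p i).2
    have := Finset.card_nsmul_le_sum Finset.univ (fun i => (p i).1 * (p i).2) (κ / n) (fun i _ => h1 i)
    rw [Finset.card_univ, Fintype.card_fin, nsmul_eq_mul] at this
    have hn' : (n : ℝ) ≠ 0 := by positivity
    rwa [mul_div_cancel₀ _ hn'] at this
  refine lt_of_lt_of_le ?_ (measure_mono hsub)
  rw [Measure.pi_pi, pos_iff_ne_zero]
  simp only [Measure.prod_prod]
  exact Finset.prod_ne_zero_iff.2 fun _ _ => mul_ne_zero hsupp1 (nuM_one γ hγ1)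

lemma muEllR_eq (hγ1 : 1 < γ) (hγ2 : γ < 2) (hR : ∀ᵐ r ∂FR, 0 < r ∧ r ≤ M) (hM : 0 ≤ M)
    (t : ℝ) (ht : 0 < t) :
    muEllR γ t FR = ENNReal.ofReal (t ^ (1 - γ)) • (lam γ FR).map (fun v => t * v) := by
  have key : Measure.map (fun p : ℝ × ℝ => p.1 * p.2) (FR.prod (muEll γ t)) =
      ENNReal.ofReal (t ^ (1 - γ)) • (lam γ FR).map (fun v => t * v) := by
    have h1 : FR.prod ((nuM γ).map (fun s => t * s)) =
        (FR.prod (nuM γ)).map (Prod.map id (fun s => t * s)) := by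
      rw [← Measure.map_prod_map _ _ measurable_id (by fun_prop), Measure.map_id]
    rw [muEll_eq γ t hγ1 hγ2 ht, Measure.prod_smul_right, h1, Measure.map_smul,
      Measure.map_map (by fun_prop) (by fun_prop)]
    unfold lam
    rw [Measure.map_map (by fun_prop) (by fun_prop)]
    congr 2
    ext p
    simp only [Function.comp, Prod.map, id]
    ring
  unfold muEllR
  rw [key]
  refine Measure.restrict_eq_self_of_ae_mem ?_
  refine Measure.ae_smul_measure ?_ _
  refine (ae_map_iff (by fun_prop) measurableSet_Ioi).2 ?_
  filter_upwards [lam_ae γ FR M hM hR] with v hv using mul_pos ht hv.1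

end


/-- `n`-fold intermediate large deviations: if `P(R ≥ κ/n) > 0`, `P(R ≥ κ/(n-ζ)) = 0` for
some `ζ ∈ (0,1)`, and `P(R₁ + ⋯ + Rₙ = κ) = 0` for independent copies `R₁,…,Rₙ` of `R`,
then `P(Y_t ≥ κt) = Qⁿ·D_I^{(n)}(κ)·t^{-(γ-1)n}·(1+o(1))` as `t → ∞`, where
`D_I^{(n)}(κ) = (1/n!)∫_{[0,1]ⁿ} P(s₁R₁ + ⋯ + sₙRₙ ≥ κ) ν(ds₁)⋯ν(dsₙ)` is a finite
positive constant. (Independent copies are expressed via the product measure `FRⁿ`.) -/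
theorem stmt_3 (γ Q : ℝ) (hγ1 : 1 < γ) (hγ2 : γ < 2) (hQ : 0 < Q)
    (FR : Measure ℝ) [IsProbabilityMeasure FR] (hFRpos : FR (Set.Iic 0) = 0)
    (hmom : Integrable (fun r => r ^ γ) FR)
    (Ω : Type*) [MeasurableSpace Ω] (P : Measure Ω) [IsProbabilityMeasure P]
    (Y : ℝ → Ω → ℝ) (hYmeas : ∀ t, Measurable (Y t))
    (hYchar : ∀ t : ℝ, 0 < t → ∀ θ : ℝ,
      ∫ ω, Complex.exp (θ * Y t ω * Complex.I) ∂P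
        = Complex.exp (Q * ∫ v, (Complex.exp (θ * v * Complex.I) - 1 - θ * v * Complex.I)
            ∂(muEllR γ t FR)))
    (κ : ℝ) (hκ : 0 < κ) (n : ℕ) (hn : 0 < n)
    (hsupp1 : FR (Set.Ici (κ / n)) ≠ 0)
    (hsupp2 : ∃ ζ ∈ Set.Ioo (0 : ℝ) 1, FR (Set.Ici (κ / (n - ζ))) = 0)
    (hatom : (Measure.pi fun _ : Fin n => FR) {x | ∑ i, x i = κ} = 0) :
    (∫⁻ s : Fin n → ℝ, (Measure.pi fun _ : Fin n => FR) {x | κ ≤ ∑ i, s i * x i}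
        ∂(Measure.pi fun _ : Fin n => nuM γ)) ≠ ⊤
    ∧ 0 < (∫⁻ s : Fin n → ℝ, (Measure.pi fun _ : Fin n => FR) {x | κ ≤ ∑ i, s i * x i}
        ∂(Measure.pi fun _ : Fin n => nuM γ))
    ∧ Tendsto (fun t => (P {ω | κ * t ≤ Y t ω}).toReal / t ^ (-((γ - 1) * n)))
        atTop
        (𝓝 (Q ^ n *
          ((∫⁻ s : Fin n → ℝ, (Measure.pi fun _ : Fin n => FR) {x | κ ≤ ∑ i, s i * x i}
              ∂(Measure.pi fun _ : Fin n => nuM γ)).toReal / n.factorial))) := by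
  obtain ⟨ζ, ⟨hζ0, hζ1⟩, hsupp2⟩ := hsupp2
  have hn1 : (1:ℝ) ≤ n := by exact_mod_cast hn
  have hnz : 0 < (n:ℝ) - ζ := by linarith
  set M : ℝ := κ / (n - ζ) with hMdef
  have hM : 0 < M := by positivity
  have hκM : ((n:ℝ) - 1) * M < κ := by
    have : ((n:ℝ) - ζ) * M = κ := by rw [hMdef]; field_simp
    nlinarith
  have hR : ∀ᵐ r ∂FR, 0 < r ∧ r ≤ M := by
    filter_upwards [measure_eq_zero_iff_ae_notMem.1 hFRpos, measure_eq_zero_iff_ae_notMem.1 hsupp2]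
      with r h1 h2
    exact ⟨not_le.1 h1, (not_le.1 h2).le⟩
  obtain ⟨hfin, hup, hlo⟩ := core (lam γ FR) M hM.le (lam_ae γ FR M hM.le hR)
    (lam_sq γ FR M hγ1 hγ2 hR) n κ hκM (GG γ FR n)
    (fun δ x hδ hx => lam_hG γ FR M hγ1 hγ2 hM.le hR n δ x hδ hx)
    (fun δ hδ => lam_hat γ FR M hγ1 hγ2 hR n κ hatom δ hδ)
  rw [← GG_eq]
  refine ⟨hfin, GG_pos γ FR hγ1 n hn κ hκ hsupp1, ?_⟩
  have hε : Tendsto (fun t : ℝ => Q * t ^ (1 - γ)) atTop (𝓝[>] (0:ℝ)) := by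
    rw [tendsto_nhdsWithin_iff]
    constructor
    · have := (tendsto_rpow_neg_atTop (show 0 < γ - 1 by linarith)).const_mul Q
      simpa using this
    · filter_upwards [eventually_gt_atTop 0] with t ht
      exact mul_pos hQ (Real.rpow_pos_of_pos ht _)
  have hprob : ∀ t, IsProbabilityMeasure (P.map (fun ω => Y t ω / t)) := fun t =>
    Measure.isProbabilityMeasure_map ((hYmeas t).div_const t).aemeasurable
  have hchar : ∀ t : ℝ, 0 < t → ∀ θ : ℝ, charFun (P.map (fun ω => Y t ω / t)) θ =
      Complex.exp (((Q * t ^ (1 - γ) : ℝ) : ℂ) *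
        ∫ v, (Complex.exp (θ * v * Complex.I) - 1 - θ * v * Complex.I) ∂(lam γ FR)) := by
    intro t ht θ
    rw [charFun_apply_real, integral_map ((hYmeas t).div_const t).aemeasurable (by fun_prop)]
    have h1 := hYchar t ht (θ / t)
    have ht' : (t : ℂ) ≠ 0 := by exact_mod_cast ht.ne'
    rw [muEllR_eq γ FR M hγ1 hγ2 hR hM.le t ht, integral_smul_measure,
      integral_map (by fun_prop) (by fun_prop),
      ENNReal.toReal_ofReal (Real.rpow_nonneg ht.le _)] at h1
    have e1 : ∀ ω, Complex.exp (((θ / t : ℝ) : ℂ) * Y t ω * Complex.I)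
        = Complex.exp (θ * ((Y t ω / t : ℝ) : ℂ) * Complex.I) := by
      intro ω; congr 1; push_cast; ring
    have e2 : ∀ v : ℝ, ((θ / t : ℝ) : ℂ) * ((t * v : ℝ) : ℂ) = θ * v := by
      intro v; push_cast; field_simp
    simp_rw [e1, e2] at h1
    rw [h1]
    congr 1
    rw [Complex.real_smul]
    push_cast
    ring
  have hP : ∀ t : ℝ, 0 < t → P {ω | κ * t ≤ Y t ω} = P.map (fun ω => Y t ω / t) (Ici κ) := by
    intro t ht
    rw [Measure.map_apply ((hYmeas t).div_const t) measurableSet_Ici]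
    congr 1
    ext ω
    exact (le_div_iff₀ ht).symm
  have hpow : ∀ t : ℝ, 0 < t → ((Q * t ^ (1 - γ)) ^ n) = Q ^ n * t ^ (-((γ - 1) * n)) := by
    intro t ht
    rw [mul_pow, ← Real.rpow_natCast (t ^ (1 - γ)), ← Real.rpow_mul ht.le]
    congr 2
    ring
  have hlim : Tendsto (fun t : ℝ => (P {ω | κ * t ≤ Y t ω}).toReal / (Q * t ^ (1 - γ)) ^ n) atTop
      (𝓝 ((GG γ FR n κ).toReal / n.factorial)) := by
    rw [tendsto_order]
    constructor
    · intro u hu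
      filter_upwards [hε.eventually (hlo u hu), eventually_gt_atTop 0] with t h1 ht
      rw [hP t ht]
      exact h1 _ (hprob t) (hchar t ht)
    · intro u hu
      filter_upwards [hε.eventually (hup u hu), eventually_gt_atTop 0] with t h1 ht
      rw [hP t ht]
      exact h1 _ (hprob t) (hchar t ht)
  refine (hlim.const_mul (Q ^ n)).congr' ?_
  filter_upwards [eventually_gt_atTop 0] with t ht
  rw [hpow t ht]
  have := (Real.rpow_pos_of_pos ht (-((γ - 1) * n))).ne'
  field_simp
end

section
/- For every m > 0 and δ > 0 there exist h > 0 and C = C(h,δ) > 0 such that for all t > 0 the following holds: if Y° is a real random variable satisfying E[exp(λ·Y°)] = exp( Q ∫_{(0,ht]} (e^{λv} − 1 − λv) μ^{ℓ,r}_t(dv) ) for all λ > 0 (the small-jump part of the Telecom process with splitting point v₀ = ht), then P(Y° ≥ δt) ≤ C·t^{−(γ−1)m}. -/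
open MeasureTheory Filter Set
open scoped ENNReal NNReal Topology

lemma aux_exp {x : ℝ} (hx : 0 ≤ x) : Real.exp x - 1 - x ≤ x ^ 2 * Real.exp x := by
  have h1 : Real.exp x - 1 ≤ x * Real.exp x := by
    have h := Real.add_one_le_exp (-x)
    have h2 := mul_le_mul_of_nonneg_right h (Real.exp_pos x).le
    rw [← Real.exp_add] at h2
    simp at h2
    nlinarith
  have h3 := mul_le_mul_of_nonneg_left h1 hx
  nlinarith

lemma aux_U {γ t y : ℝ} (hγ1 : 1 < γ) (hγ2 : γ < 2) (hy : 0 < y) (hyt : y ≤ t) :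
    ∫⁻ u, ENNReal.ofReal ((min u y) ^ 2 * (t + u)) ∂(muU γ)
      ≤ ENNReal.ofReal ((2 / (2 - γ) + 1 / γ + 1 / (γ - 1)) * (t * y ^ (2 - γ))) := by
  have ht : 0 < t := hy.trans_le hyt
  unfold muU
  rw [lintegral_withDensity_eq_lintegral_mul _ (by fun_prop) (by fun_prop)]
  rw [← Ioc_union_Ioi_eq_Ioi hy.le]
  refine (lintegral_union_le _ _ _).trans ?_
  have e1 : ∫⁻ u in Ioc 0 y, ((fun u => ENNReal.ofReal (u ^ (-γ - 1))) *
      fun u => ENNReal.ofReal ((min u y) ^ 2 * (t + u))) u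
      ≤ ENNReal.ofReal (2 / (2 - γ) * (t * y ^ (2 - γ))) := by
    have hi : IntegrableOn (fun u : ℝ => 2 * t * u ^ (1 - γ)) (Ioc 0 y) := by
      have := (intervalIntegral.intervalIntegrable_rpow' (a := 0) (b := y) (r := 1 - γ)
        (by linarith)).const_mul (2 * t)
      exact (intervalIntegrable_iff_integrableOn_Ioc_of_le hy.le).1 this
    have hv : ∫ u in Ioc 0 y, 2 * t * u ^ (1 - γ) = 2 / (2 - γ) * (t * y ^ (2 - γ)) := by
      rw [← intervalIntegral.integral_of_le hy.le, intervalIntegral.integral_const_mul,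
        integral_rpow (Or.inl (by linarith))]
      have : (1 - γ + 1) = 2 - γ := by ring
      rw [this, Real.zero_rpow (by linarith)]
      ring
    rw [← hv, ofReal_integral_eq_lintegral_ofReal hi]
    · refine setLIntegral_mono (by fun_prop) fun u hu => ?_
      simp only [Pi.mul_apply]
      have hu0 : 0 < u := hu.1
      rw [← ENNReal.ofReal_mul (by positivity)]
      apply ENNReal.ofReal_le_ofReal
      rw [min_eq_left hu.2]
      have : u ^ (1 - γ) = u ^ (-γ - 1) * u ^ 2 := by
        rw [← Real.rpow_natCast u 2, ← Real.rpow_add hu0]; congr 1; push_cast; ring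
      rw [this]
      have h1 : t + u ≤ 2 * t := by linarith [hu.2]
      have h2 : 0 ≤ u ^ (-γ - 1) * u ^ 2 := by positivity
      nlinarith [mul_le_mul_of_nonneg_left h1 h2]
    · refine (ae_restrict_iff' measurableSet_Ioc).2 (.of_forall fun u hu => ?_)
      have hu0 : 0 < u := hu.1
      simp only [Pi.zero_apply]
      positivity
  have e2 : ∫⁻ u in Ioi y, ((fun u => ENNReal.ofReal (u ^ (-γ - 1))) *
      fun u => ENNReal.ofReal ((min u y) ^ 2 * (t + u))) u
      ≤ ENNReal.ofReal ((1 / γ + 1 / (γ - 1)) * (t * y ^ (2 - γ))) := by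
    have i1 : IntegrableOn (fun u : ℝ => y ^ 2 * t * u ^ (-γ - 1)) (Ioi y) :=
      (integrableOn_Ioi_rpow_of_lt (by linarith) hy).const_mul _
    have i2 : IntegrableOn (fun u : ℝ => y ^ 2 * u ^ (-γ)) (Ioi y) :=
      (integrableOn_Ioi_rpow_of_lt (by linarith) hy).const_mul _
    have hv : ∫ u in Ioi y, (y ^ 2 * t * u ^ (-γ - 1) + y ^ 2 * u ^ (-γ))
        ≤ (1 / γ + 1 / (γ - 1)) * (t * y ^ (2 - γ)) := by
      rw [integral_add i1 i2, integral_const_mul, integral_const_mul,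
        integral_Ioi_rpow_of_lt (by linarith) hy, integral_Ioi_rpow_of_lt (by linarith) hy]
      have a1 : y ^ (-γ - 1 + 1) = y ^ (-γ) := by congr 1; ring
      have a2 : y ^ (-γ + 1) = y ^ (-γ) * y := by rw [Real.rpow_add hy, Real.rpow_one]
      have a3 : y ^ (2 - γ) = y ^ 2 * y ^ (-γ) := by
        rw [← Real.rpow_natCast y 2, ← Real.rpow_add hy]; congr 1
      rw [a1, a2, a3]
      have b1 : -y ^ (-γ) / (-γ - 1 + 1) = y ^ (-γ) / γ := by
        rw [show -γ - 1 + 1 = -γ by ring, neg_div_neg_eq]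
      have b2 : -(y ^ (-γ) * y) / (-γ + 1) = (y ^ (-γ) * y) / (γ - 1) := by
        rw [show -γ + 1 = -(γ - 1) by ring, neg_div_neg_eq]
      rw [b1, b2]
      have hp : 0 < γ - 1 := by linarith
      have : y ^ 2 * (y ^ (-γ) * y / (γ - 1)) ≤ y ^ 2 * (y ^ (-γ) * t / (γ - 1)) := by
        gcongr
      calc _ ≤ y ^ 2 * t * (y ^ (-γ) / γ) + y ^ 2 * (y ^ (-γ) * t / (γ - 1)) := by gcongr
        _ = _ := by ring
    refine le_trans ?_ (ENNReal.ofReal_le_ofReal hv)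
    have i3 : IntegrableOn (fun u : ℝ => y ^ 2 * t * u ^ (-γ - 1) + y ^ 2 * u ^ (-γ)) (Ioi y) :=
      i1.add i2
    rw [ofReal_integral_eq_lintegral_ofReal i3]
    · refine setLIntegral_mono (by fun_prop) fun u hu => ?_
      simp only [Pi.mul_apply]
      have hu0 : 0 < u := hy.trans hu
      rw [← ENNReal.ofReal_mul (by positivity)]
      apply ENNReal.ofReal_le_ofReal
      rw [min_eq_right (le_of_lt hu)]
      have : u ^ (-γ) = u ^ (-γ - 1) * u := by
        nth_rewrite 3 [← Real.rpow_one u]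
        rw [← Real.rpow_add hu0]; congr 1; ring
      rw [this]
      apply le_of_eq
      ring
    · refine (ae_restrict_iff' measurableSet_Ioi).2 (.of_forall fun u hu => ?_)
      have hu0 : 0 < u := hy.trans hu
      simp only [Pi.zero_apply]
      positivity
  refine (add_le_add e1 e2).trans ?_
  have p1 : 0 < 2 - γ := by linarith
  have p2 : 0 < γ - 1 := by linarith
  rw [← ENNReal.ofReal_add (by positivity) (by positivity)]
  apply ENNReal.ofReal_le_ofReal
  apply le_of_eq
  ring

lemma measurable_ellK (t : ℝ) : Measurable (fun p : ℝ × ℝ => ellK t p.1 p.2) := by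
  unfold ellK; fun_prop

instance muEll_sfinite (γ t : ℝ) : SFinite (muEll γ t) := by
  unfold muEll; infer_instance

lemma measurable_ind (x : ℝ) :
    Measurable ((Ioc 0 x).indicator fun v : ℝ => ENNReal.ofReal (v ^ 2)) :=
  Measurable.indicator (by fun_prop) measurableSet_Ioc

lemma aux_Ell {γ t x : ℝ} (hγ1 : 1 < γ) (hγ2 : γ < 2) (hx : 0 < x) (ht : 0 < t) :
    ∫⁻ v in Ioc 0 x, ENNReal.ofReal (v ^ 2) ∂(muEll γ t)
      ≤ ENNReal.ofReal ((2 / (2 - γ) + 1 / γ + 1 / (γ - 1)) * (t * x ^ (2 - γ))) := by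
  rw [← lintegral_indicator measurableSet_Ioc]
  unfold muEll
  refine (lintegral_mono' Measure.restrict_le_self le_rfl).trans ?_
  rw [lintegral_map (measurable_ind x) (measurable_ellK t)]
  have hcm : Measurable fun p : ℝ × ℝ =>
      (Ioc 0 x).indicator (fun v : ℝ => ENNReal.ofReal (v ^ 2)) (ellK t p.1 p.2) :=
    (measurable_ind x).comp (measurable_ellK t)
  rw [lintegral_prod_symm _ hcm.aemeasurable]
  have p1 : 0 < 2 - γ := by linarith
  have p2 : 0 < γ - 1 := by linarith
  have hy : 0 < min x t := lt_min hx ht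
  refine le_trans ?_ ((aux_U hγ1 hγ2 hy (min_le_right x t)).trans
    (ENNReal.ofReal_le_ofReal ?_))
  · have hpos : ∀ᵐ u ∂(muU γ), 0 < u := by
      unfold muU
      exact (withDensity_absolutelyContinuous _ _).ae_le (ae_restrict_mem measurableSet_Ioi)
    refine lintegral_mono_ae (hpos.mono fun u hu => ?_)
    have : ∀ s, (Ioc 0 x).indicator (fun v : ℝ => ENNReal.ofReal (v ^ 2)) (ellK t s u)
        ≤ (Ioo (-u) t).indicator (fun _ => ENNReal.ofReal ((min u (min x t)) ^ 2)) s := by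
      intro s
      by_cases hm : ellK t s u ∈ Ioc 0 x
      · rw [indicator_of_mem hm]
        obtain ⟨h1, h2⟩ := hm
        have h3 : ellK t s u = min (s + u) t - max s 0 := by
          unfold ellK at h1 ⊢
          rcases le_total 0 (min (s + u) t - max s 0) with h | h
          · rw [max_eq_right h]
          · rw [max_eq_left h] at h1; exact absurd h1 (lt_irrefl _)
        rw [h3] at h1 h2 ⊢
        have q1 := min_le_left (s + u) t
        have q2 := min_le_right (s + u) t
        have q3 := le_max_left s 0
        have q4 := le_max_right s 0
        rw [indicator_of_mem (by constructor <;> linarith)]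
        apply ENNReal.ofReal_le_ofReal
        apply pow_le_pow_left₀ h1.le
        refine le_min (by linarith) (le_min h2 (by linarith))
      · rw [indicator_of_notMem hm]; exact zero_le
    refine (lintegral_mono this).trans ?_
    rw [lintegral_indicator measurableSet_Ioo, setLIntegral_const, Real.volume_Ioo,
      ← ENNReal.ofReal_mul (by positivity), sub_neg_eq_add]
  · have : min x t ≤ x := min_le_left _ _
    have h0 : 0 ≤ 2 / (2 - γ) + 1 / γ + 1 / (γ - 1) := by positivity
    gcongr

lemma aux_EllR {γ t x : ℝ} (hγ1 : 1 < γ) (hγ2 : γ < 2) (hx : 0 < x) (ht : 0 < t)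
    (FR : Measure ℝ) [IsProbabilityMeasure FR] (hFRpos : FR (Set.Iic 0) = 0)
    (hmom : Integrable (fun r => r ^ γ) FR) :
    ∫⁻ v in Ioc 0 x, ENNReal.ofReal (v ^ 2) ∂(muEllR γ t FR)
      ≤ ENNReal.ofReal ((2 / (2 - γ) + 1 / γ + 1 / (γ - 1)) * (t * x ^ (2 - γ))
        * ∫ r, r ^ γ ∂FR) := by
  have p1 : 0 < 2 - γ := by linarith
  have p2 : 0 < γ - 1 := by linarith
  set K := 2 / (2 - γ) + 1 / γ + 1 / (γ - 1) with hK
  have hK0 : 0 ≤ K := by positivity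
  have hpos : ∀ᵐ r ∂FR, 0 < r := by
    rw [ae_iff]; convert hFRpos using 2; ext r; simp
  rw [← lintegral_indicator measurableSet_Ioc]
  unfold muEllR
  refine (lintegral_mono' Measure.restrict_le_self le_rfl).trans ?_
  have hm : Measurable (fun p : ℝ × ℝ => p.1 * p.2) := by fun_prop
  rw [lintegral_map (measurable_ind x) hm]
  have hcm : Measurable fun p : ℝ × ℝ =>
      (Ioc 0 x).indicator (fun v : ℝ => ENNReal.ofReal (v ^ 2)) (p.1 * p.2) :=
    (measurable_ind x).comp hm
  rw [lintegral_prod _ hcm.aemeasurable]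
  rw [← integral_const_mul, ofReal_integral_eq_lintegral_ofReal (hmom.const_mul _)
    (hpos.mono fun r hr => by simp only [Pi.zero_apply]; positivity)]
  refine lintegral_mono_ae (hpos.mono fun r hr => ?_)
  have : ∀ l, (Ioc 0 x).indicator (fun v : ℝ => ENNReal.ofReal (v ^ 2)) (r * l)
      = ENNReal.ofReal (r ^ 2) *
        (Ioc 0 (x / r)).indicator (fun v : ℝ => ENNReal.ofReal (v ^ 2)) l := by
    intro l
    have hiff : r * l ∈ Ioc 0 x ↔ l ∈ Ioc 0 (x / r) := by
      rw [mem_Ioc, mem_Ioc, le_div_iff₀ hr, mul_comm l r, mul_pos_iff_of_pos_left hr]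
    by_cases h : l ∈ Ioc 0 (x / r)
    · rw [indicator_of_mem h, indicator_of_mem (hiff.2 h),
        ← ENNReal.ofReal_mul (by positivity), mul_pow]
    · rw [indicator_of_notMem h, indicator_of_notMem (fun h' => h (hiff.1 h')), mul_zero]
  simp only [this]
  rw [lintegral_const_mul _ (measurable_ind _), lintegral_indicator measurableSet_Ioc]
  refine (mul_le_mul_right (aux_Ell hγ1 hγ2 (div_pos hx hr) ht) _).trans ?_
  rw [← ENNReal.ofReal_mul (by positivity)]
  apply ENNReal.ofReal_le_ofReal
  apply le_of_eq
  rw [Real.div_rpow hx.le hr.le]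
  have : r ^ γ = r ^ 2 / r ^ (2 - γ) := by
    rw [← Real.rpow_natCast r 2, ← Real.rpow_sub hr]; congr 1; push_cast; ring
  rw [this]
  ring

lemma aux_int {γ t x l : ℝ} (hγ1 : 1 < γ) (hγ2 : γ < 2) (hx : 0 < x) (ht : 0 < t) (hl : 0 < l)
    (FR : Measure ℝ) [IsProbabilityMeasure FR] (hFRpos : FR (Set.Iic 0) = 0)
    (hmom : Integrable (fun r => r ^ γ) FR) :
    ∫ v in Ioc 0 x, (Real.exp (l * v) - 1 - l * v) ∂(muEllR γ t FR)
      ≤ l ^ 2 * Real.exp (l * x) * ((2 / (2 - γ) + 1 / γ + 1 / (γ - 1)) * (t * x ^ (2 - γ))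
        * ∫ r, r ^ γ ∂FR) := by
  have p1 : 0 < 2 - γ := by linarith
  have p2 : 0 < γ - 1 := by linarith
  have hpos : ∀ᵐ r ∂FR, 0 < r := by
    rw [ae_iff]; convert hFRpos using 2; ext r; simp
  have hM : 0 ≤ ∫ r, r ^ γ ∂FR :=
    integral_nonneg_of_ae (hpos.mono fun r hr => by simp only [Pi.zero_apply]; positivity)
  rw [integral_eq_lintegral_of_nonneg_ae
    (.of_forall fun v => by
      have := Real.add_one_le_exp (l * v)
      simp only [Pi.zero_apply]; linarith)
    (Continuous.aestronglyMeasurable (by fun_prop))]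
  refine ENNReal.toReal_le_of_le_ofReal (by positivity) ?_
  rw [ENNReal.ofReal_mul (by positivity)]
  refine le_trans ?_ (mul_le_mul_right (aux_EllR hγ1 hγ2 hx ht FR hFRpos hmom) _)
  rw [← lintegral_const_mul _ (by fun_prop)]
  refine setLIntegral_mono (by fun_prop) fun v hv => ?_
  rw [← ENNReal.ofReal_mul (by positivity)]
  apply ENNReal.ofReal_le_ofReal
  have hv0 : 0 < v := hv.1
  have hvx := hv.2
  calc _ ≤ (l * v) ^ 2 * Real.exp (l * v) := aux_exp (by positivity)
    _ ≤ (l * v) ^ 2 * Real.exp (l * x) := by gcongr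
    _ = _ := by ring

/-- Exponential estimate for the small-jump part: for every `m, δ > 0` there are `h > 0` and
`C > 0` such that for all `t > 0`, any random variable `Y°` (on any probability space) with
`E exp(λY°) = exp(Q ∫_{(0,ht]} (e^{λv} - 1 - λv) μ^{ℓ,r}_t(dv))` for all `λ > 0` satisfies
`P(Y° ≥ δt) ≤ C·t^{-(γ-1)m}`. -/
theorem stmt_5 (γ Q : ℝ) (hγ1 : 1 < γ) (hγ2 : γ < 2) (hQ : 0 < Q)
    (FR : Measure ℝ) [IsProbabilityMeasure FR] (hFRpos : FR (Set.Iic 0) = 0)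
    (hmom : Integrable (fun r => r ^ γ) FR)
    (m δ : ℝ) (hm : 0 < m) (hδ : 0 < δ) :
    ∃ h > (0 : ℝ), ∃ C > (0 : ℝ), ∀ t : ℝ, 0 < t →
      ∀ (Ω : Type) [MeasurableSpace Ω] (P : Measure Ω) [IsProbabilityMeasure P],
        ∀ Ycirc : Ω → ℝ,
          (∀ l : ℝ, 0 < l →
            ∫ ω, Real.exp (l * Ycirc ω) ∂P
              = Real.exp (Q * ∫ v in Set.Ioc 0 (h * t),
                  (Real.exp (l * v) - 1 - l * v) ∂(muEllR γ t FR))) →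
          (P {ω | δ * t ≤ Ycirc ω}).toReal ≤ C * t ^ (-(γ - 1) * m) := by
  have p1 : 0 < 2 - γ := by linarith
  have p2 : 0 < γ - 1 := by linarith
  have hpos : ∀ᵐ r ∂FR, 0 < r := by
    rw [ae_iff]; convert hFRpos using 2; ext r; simp
  have hM : 0 ≤ ∫ r, r ^ γ ∂FR :=
    integral_nonneg_of_ae (hpos.mono fun r hr => by simp only [Pi.zero_apply]; positivity)
  obtain ⟨c, hc⟩ : ∃ c, c = (γ - 1) * m / δ := ⟨_, rfl⟩
  have hc0 : 0 < c := by rw [hc]; positivity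
  obtain ⟨h, hh⟩ : ∃ h, h = (γ - 1) / (2 * c) := ⟨_, rfl⟩
  have hh0 : 0 < h := by rw [hh]; positivity
  obtain ⟨ε, hε⟩ : ∃ ε, ε = (γ - 1) / 4 := ⟨_, rfl⟩
  have hε0 : 0 < ε := by rw [hε]; positivity
  obtain ⟨K, hK⟩ : ∃ K, K = 2 / (2 - γ) + 1 / γ + 1 / (γ - 1) := ⟨_, rfl⟩
  have hK0 : 0 < K := by rw [hK]; positivity
  obtain ⟨M, hMd⟩ : ∃ M, M = ∫ r, r ^ γ ∂FR := ⟨_, rfl⟩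
  rw [← hMd] at hM
  obtain ⟨B, hB⟩ : ∃ B, B = Q * K * M * h ^ (2 - γ) * c ^ 2 / ε ^ 2 := ⟨_, rfl⟩
  have hB0 : 0 ≤ B := by rw [hB]; positivity
  refine ⟨h, hh0, Real.exp B, Real.exp_pos B, ?_⟩
  intro t ht Ω _ P _ Y hY
  have hB1 : 1 ≤ Real.exp B := Real.one_le_exp hB0
  rcases le_or_gt t 1 with ht1 | ht1
  · have h1 : (P {ω | δ * t ≤ Y ω}).toReal ≤ 1 := by
      have := measureReal_le_one (μ := P) (s := {ω | δ * t ≤ Y ω})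
      exact this
    have h2 : 1 ≤ t ^ (-(γ - 1) * m) :=
      Real.one_le_rpow_of_pos_of_le_one_of_nonpos ht ht1 (by nlinarith)
    nlinarith
  · have hlog : 0 < Real.log t := Real.log_pos ht1
    obtain ⟨l, hl⟩ : ∃ l, l = c * Real.log t / t := ⟨_, rfl⟩
    have hl0 : 0 < l := by rw [hl]; positivity
    have hYl := hY l hl0
    have hint : Integrable (fun ω => Real.exp (l * Y ω)) P := by
      by_contra hn
      rw [integral_undef hn] at hYl
      exact absurd hYl (Real.exp_pos _).ne
    have hI := aux_int hγ1 hγ2 (mul_pos hh0 ht) ht hl0 FR hFRpos hmom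
    rw [← hK, ← hMd] at hI
    have hE : Real.exp (l * (h * t)) = t ^ (2 * ε) := by
      rw [Real.rpow_def_of_pos ht]; congr 1
      rw [hl, hε, hh]; field_simp; norm_num
    have hl2 : l ^ 2 ≤ c ^ 2 / ε ^ 2 * (t ^ (2 * ε) / t ^ 2) := by
      have hlg := Real.log_le_rpow_div ht.le hε0
      have : t ^ (2 * ε) = (t ^ ε) ^ 2 := by
        rw [← Real.rpow_natCast, ← Real.rpow_mul ht.le]; congr 1; push_cast; ring
      rw [this]
      calc l ^ 2 = (c * Real.log t / t) ^ 2 := by rw [hl]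
        _ ≤ (c * (t ^ ε / ε) / t) ^ 2 := by gcongr
        _ = _ := by field_simp
    have hbound : Q * ∫ v in Set.Ioc 0 (h * t),
        (Real.exp (l * v) - 1 - l * v) ∂(muEllR γ t FR) ≤ B := by
      have hone : t ^ (2 * ε) / t ^ 2 * t ^ (2 * ε) * (t * t ^ (2 - γ)) = 1 := by
        have e1 : t ^ (2 * ε) / t ^ 2 * t ^ (2 * ε) * (t * t ^ (2 - γ))
            = (t ^ (2 * ε) * t ^ (2 * ε) * t ^ (2 - γ)) / t := by field_simp
        rw [e1, ← Real.rpow_add ht, ← Real.rpow_add ht,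
          show 2 * ε + 2 * ε + (2 - γ) = 1 by rw [hε]; ring, Real.rpow_one, div_self ht.ne']
      calc _ ≤ Q * (l ^ 2 * Real.exp (l * (h * t)) * (K * (t * (h * t) ^ (2 - γ)) * M)) := by
            gcongr
        _ ≤ Q * ((c ^ 2 / ε ^ 2 * (t ^ (2 * ε) / t ^ 2)) * t ^ (2 * ε)
              * (K * (t * (h * t) ^ (2 - γ)) * M)) := by
            rw [hE]; gcongr
        _ = B * (t ^ (2 * ε) / t ^ 2 * t ^ (2 * ε) * (t * t ^ (2 - γ))) := by
            rw [Real.mul_rpow hh0.le ht.le, hB]; ring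
        _ = B := by rw [hone, mul_one]
    have hmark := mul_meas_ge_le_integral_of_nonneg (μ := P)
      (.of_forall fun ω => (Real.exp_pos (l * Y ω)).le) hint (Real.exp (l * (δ * t)))
    have hset : {ω | Real.exp (l * (δ * t)) ≤ Real.exp (l * Y ω)} = {ω | δ * t ≤ Y ω} := by
      ext ω
      simp only [mem_ofPred_eq, Real.exp_le_exp]
      exact mul_le_mul_iff_right₀ hl0
    rw [hset, hYl] at hmark
    have hle := hmark.trans (Real.exp_le_exp.2 hbound)
    have hinv : t ^ (-(γ - 1) * m) = (Real.exp (l * (δ * t)))⁻¹ := by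
      rw [← Real.exp_neg, Real.rpow_def_of_pos ht]; congr 1
      rw [hl, hc]; field_simp
    rw [hinv, ← div_eq_mul_inv, le_div_iff₀ (Real.exp_pos _), mul_comm]
    exact hle
end
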